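/- arXiv:0709.0207 — 2 statements merged into one kernel-verified Lean document; each statement's English description precedes it below -/
import Mathlib

section
/- Let (W,S) be the Coxeter system of type B₃ with S = {s,t,u}, where st has order 3, tu has order 4 and su has order 2. Then f_W is not defined at the element stsuts (and this is the only element at which f_W is undefined), and the elements x at which f_W is defined but x is not separated are exactly the following 20 elements: utu, tut, utsu, tuts, utsut, tsuts, sutu, tsutu, utsutu, (tsu)², tutsutu, stut, stsut, (sut)², sutsutu, tsutsut, tsutsutu, stuts, stutsutu, stsutsut. -/
noncomputable section

open scoped Classical

namespace KLPaper

variable {W : Type*} [Group W]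

/-- The word length of `w` with respect to the generating set `S`:
the minimal length of an expression of `w` as a product of elements of `S`. -/
def wordLength (S : Set W) (w : W) : ℕ :=
  sInf {k | ∃ l : List W, l.length = k ∧ (∀ x ∈ l, x ∈ S) ∧ l.prod = w}

/-- A reflection: a conjugate of a simple reflection. -/
def IsReflection (S : Set W) (t : W) : Prop :=
  ∃ w : W, ∃ s ∈ S, t = w * s * w⁻¹

/-- One step in the Bruhat order. -/
def bruhatStep (S : Set W) (a b : W) : Prop :=
  ∃ t, IsReflection S t ∧ b = a * t ∧ wordLength S a < wordLength S b

/-- The strict Bruhat order on `(W, S)`. -/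
def bruhatLT (S : Set W) : W → W → Prop := Relation.TransGen (bruhatStep S)

/-- The Bruhat order on `(W, S)`. -/
def bruhatLE (S : Set W) : W → W → Prop := Relation.ReflTransGen (bruhatStep S)

/-- The underlying module of the Hecke algebra: the free `ℤ[v,v⁻¹]`-module on `W`. -/
abbrev HMod (W : Type*) := W →₀ LaurentPolynomial ℤ

/-- The standard basis element `H_w` of the Hecke algebra. -/
def std (w : W) : HMod W := Finsupp.single w 1

/-- All of the data of the Hecke algebra of `(W, S)` together with its
Kazhdan-Lusztig basis:  the (unique) multiplication making the free module
`HMod W` into an associative `ℤ[v,v⁻¹]`-algebra with the defining relations of the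
Hecke algebra, the bar involution, and the (unique) Kazhdan-Lusztig basis `klb`. -/
structure KLData (S : Set W) where
  /-- The Hecke algebra multiplication. -/
  mul : HMod W → HMod W → HMod W
  mul_add_left : ∀ a b c : HMod W, mul (a + b) c = mul a c + mul b c
  mul_add_right : ∀ a b c : HMod W, mul a (b + c) = mul a b + mul a c
  mul_smul_left : ∀ (r : LaurentPolynomial ℤ) (a b : HMod W), mul (r • a) b = r • mul a b
  mul_smul_right : ∀ (r : LaurentPolynomial ℤ) (a b : HMod W), mul a (r • b) = r • mul a b
  mul_assoc : ∀ a b c : HMod W, mul (mul a b) c = mul a (mul b c)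
  one_mul : ∀ a : HMod W, mul (std 1) a = a
  mul_one : ∀ a : HMod W, mul a (std 1) = a
  /-- `H_s H_w = H_{sw}` if `sw > w`. -/
  mul_gen_of_lt : ∀ s ∈ S, ∀ w : W, bruhatLT S w (s * w) →
    mul (std s) (std w) = std (s * w)
  /-- `H_s H_w = (v - v⁻¹) H_w + H_{sw}` if `sw < w`. -/
  mul_gen_of_gt : ∀ s ∈ S, ∀ w : W, bruhatLT S (s * w) w →
    mul (std s) (std w) =
      ((LaurentPolynomial.T 1 : LaurentPolynomial ℤ) - LaurentPolynomial.T (-1)) • std w + std (s * w)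
  /-- The inverse of the standard basis element `H_w`. -/
  sinv : W → HMod W
  mul_sinv : ∀ w : W, mul (std w) (sinv w) = std 1
  sinv_mul : ∀ w : W, mul (sinv w) (std w) = std 1
  /-- The bar involution of the Hecke algebra. -/
  bar : HMod W → HMod W
  bar_add : ∀ a b : HMod W, bar (a + b) = bar a + bar b
  bar_smul : ∀ (r : LaurentPolynomial ℤ) (a : HMod W),
    bar (r • a) = (LaurentPolynomial.invert (R := ℤ) r) • bar a
  bar_mul : ∀ a b : HMod W, bar (mul a b) = mul (bar a) (bar b)
  /-- The bar involution sends `H_w` to `(H_{w⁻¹})⁻¹`. -/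
  bar_std : ∀ w : W, bar (std w) = sinv w⁻¹
  /-- The Kazhdan-Lusztig basis element `h_w`. -/
  klb : W → HMod W
  klb_bar : ∀ w : W, bar (klb w) = klb w
  klb_supp : ∀ w x : W, (klb w) x ≠ 0 → bruhatLE S x w
  klb_diag : ∀ w : W, (klb w) w = 1
  klb_lower : ∀ w x : W, x ≠ w → (klb w) x ∈
    Submodule.span ℤ ((fun n : ℤ => (LaurentPolynomial.T n : LaurentPolynomial ℤ)) ''
      {n : ℤ | n < 0})
  /-- The Kazhdan-Lusztig basis elements form a basis: unique expansion. -/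
  klb_basis : ∀ h : HMod W, ∃! c : W →₀ LaurentPolynomial ℤ,
    h = c.sum fun x a => a • klb x

variable {S : Set W}

/-- The KL-support of an element of the Hecke algebra: the set of `x` such that the
coefficient of `h_x` in the (unique) expansion in the Kazhdan-Lusztig basis is nonzero. -/
def suppKL (K : KLData S) (h : HMod W) : Set W :=
  {x | ∀ c : W →₀ LaurentPolynomial ℤ, h = (c.sum fun y a => a • K.klb y) → c x ≠ 0}

/-- `ˢZ = {x ∈ Z | sx > x}`. -/
def upLeft (S : Set W) (s : W) (Z : Set W) : Set W := {x ∈ Z | bruhatLT S x (s * x)}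

/-- `Zˢ = {x ∈ Z | xs > x}`. -/
def upRight (S : Set W) (t : W) (Z : Set W) : Set W := {x ∈ Z | bruhatLT S x (x * t)}

/-- Fuel-based auxiliary definition of the partial function `f_W`, computed by
induction on the Bruhat order (the fuel is the length). -/
def fAux (K : KLData S) : ℕ → W → Option (Set W)
  | 0, x => if x = 1 then some {(1 : W)} else none
  | n + 1, x =>
    if x = 1 then some {(1 : W)} else
    if (∃ s ∈ S, bruhatLT S (s * x) x ∧
          ∃ G : Set W, fAux K n (s * x) = some G ∧ upLeft S s G = G) ∨
       (∃ t ∈ S, bruhatLT S (x * t) x ∧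
          ∃ G : Set W, fAux K n (x * t) = some G ∧ upRight S t G = G) then
      some
        ((⋂ s ∈ S, ⋂ G ∈ {G : Set W | bruhatLT S (s * x) x ∧
              fAux K n (s * x) = some G ∧ upLeft S s G = G},
            ⋃ w ∈ G, suppKL K (K.mul (K.klb s) (K.klb w))) ∩
         (⋂ t ∈ S, ⋂ G ∈ {G : Set W | bruhatLT S (x * t) x ∧
              fAux K n (x * t) = some G ∧ upRight S t G = G},
            ⋃ w ∈ G, suppKL K (K.mul (K.klb w) (K.klb t))))
    else none

/-- The partial function `f_W` from `W` to subsets of `W`; the value `none` means that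
`f_W` is not defined at the given element. -/
def fW (K : KLData S) (x : W) : Option (Set W) := fAux K (wordLength S x) x

/-- `x` is separated if `f_W` is defined at `x` with value `{x}`. -/
def Separated (K : KLData S) (x : W) : Prop := fW K x = some {x}

/-- The set `σ(W)` of separated elements. -/
def sigma' (K : KLData S) : Set W := {x | Separated K x}

end KLPaper

/-!
The product of `h_s` and `h_w` for `sw > w` is `h_{sw}` plus the sum of `μ(x, w) h_x` over the `x`
with `sx < x`, and similarly on the right. So the KL-supports in the recursion for `f_W`, and with
them `f_W` itself, are determined by the coefficients `μ(x, w)`, and these come out of the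
Kazhdan–Lusztig recursion for the polynomials `h_{x,w}`. For a finite group given by its action
table both recursions are an explicit computation. In type B₃ a rewriting system shows that the
group has at most 48 elements, and the left action of the table satisfies the Coxeter relations,
which shows that no two of the 48 normal forms coincide.
-/

namespace KLPaper

open LaurentPolynomial

section Coxeter

variable {B W : Type*} [Group W] {M : CoxeterMatrix B} (cs : CoxeterSystem M W)

/-- Multiplication by the simple reflection `s_i`, from the left for `Sum.inl i` and from the right
for `Sum.inr i`. Letting `σ : B ⊕ B` range over both kinds treats the two sides of `f_W` at once. -/
def simpleMul : B ⊕ B → W → W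
  | .inl i, w => cs.simple i * w
  | .inr i, w => w * cs.simple i

theorem simpleMul_involutive (σ : B ⊕ B) : Function.Involutive (simpleMul cs σ) := by
  rcases σ with i | i <;> intro w <;> simp [simpleMul]

theorem simpleMul_eq_iff {σ : B ⊕ B} {x y : W} : simpleMul cs σ x = y ↔ x = simpleMul cs σ y :=
  (simpleMul_involutive cs σ).eq_iff

theorem length_simpleMul (σ : B ⊕ B) (w : W) :
    cs.length (simpleMul cs σ w) = cs.length w + 1 ∨
      cs.length (simpleMul cs σ w) + 1 = cs.length w := by
  rcases σ with i | i
  · exact cs.length_simple_mul w i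
  · exact cs.length_mul_simple w i

theorem exists_length_simple_mul_lt {w : W} (hw : w ≠ 1) :
    ∃ i, cs.length (cs.simple i * w) < cs.length w :=
  cs.exists_leftDescent_of_ne_one hw

theorem wordLength_range_simple (w : W) : wordLength (Set.range cs.simple) w = cs.length w := by
  refine le_antisymm (Nat.sInf_le ?_) (le_csInf ?_ ?_)
  · obtain ⟨ω, hω, rfl⟩ := cs.exists_isReduced w
    exact ⟨ω.map cs.simple, by simp [hω.eq], by simp, rfl⟩
  · obtain ⟨ω, rfl⟩ := cs.wordProd_surjective w
    exact ⟨_, ω.map cs.simple, rfl, by simp, rfl⟩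
  · rintro k ⟨l, rfl, hl, rfl⟩
    obtain ⟨ω, rfl⟩ : ∃ ω : List B, ω.map cs.simple = l :=
      Set.mem_range.mp ((Set.range_list_map cs.simple).symm ▸ hl)
    rw [List.length_map]
    exact cs.length_wordProd_le ω

theorem bruhatLT_imp_wordLength_lt {S : Set W} {x y : W} (h : bruhatLT S x y) :
    wordLength S x < wordLength S y := by
  induction h with
  | single h => exact h.choose_spec.2.2
  | tail _ h ih => exact ih.trans h.choose_spec.2.2

theorem eq_or_length_lt_of_bruhatLE {x y : W} (h : bruhatLE (Set.range cs.simple) x y) :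
    y = x ∨ cs.length x < cs.length y := by
  refine (Relation.reflTransGen_iff_eq_or_transGen.mp h).imp_right fun h ↦ ?_
  simpa only [wordLength_range_simple] using bruhatLT_imp_wordLength_lt h

theorem bruhatLT_simpleMul_iff (σ : B ⊕ B) (w : W) :
    bruhatLT (Set.range cs.simple) w (simpleMul cs σ w) ↔
      cs.length w < cs.length (simpleMul cs σ w) := by
  simp only [← wordLength_range_simple cs]
  refine ⟨bruhatLT_imp_wordLength_lt, fun h ↦ .single ?_⟩
  rcases σ with i | i
  · exact ⟨w⁻¹ * cs.simple i * w⁻¹⁻¹, ⟨w⁻¹, _, ⟨i, rfl⟩, rfl⟩, by simp [simpleMul, mul_assoc], h⟩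
  · exact ⟨cs.simple i, ⟨1, _, ⟨i, rfl⟩, by simp⟩, rfl, h⟩

theorem bruhatLT_simpleMul_left_iff (σ : B ⊕ B) (w : W) :
    bruhatLT (Set.range cs.simple) (simpleMul cs σ w) w ↔
      cs.length (simpleMul cs σ w) < cs.length w := by
  simpa only [simpleMul_involutive cs σ w] using bruhatLT_simpleMul_iff cs σ (simpleMul cs σ w)

end Coxeter

section Hecke

variable {B W : Type*} [Group W] {M : CoxeterMatrix B} {cs : CoxeterSystem M W}
  (K : KLData (Set.range cs.simple))

theorem mul_simple_std_of_lt {i : B} {w : W} (h : cs.length w < cs.length (cs.simple i * w)) :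
    K.mul (std (cs.simple i)) (std w) = std (cs.simple i * w) :=
  K.mul_gen_of_lt _ ⟨i, rfl⟩ w ((bruhatLT_simpleMul_iff cs (.inl i) w).mpr h)

theorem mul_simple_std_of_gt {i : B} {w : W} (h : cs.length (cs.simple i * w) < cs.length w) :
    K.mul (std (cs.simple i)) (std w) = (T 1 - T (-1) : ℤ[T;T⁻¹]) • std w + std (cs.simple i * w) :=
  K.mul_gen_of_gt _ ⟨i, rfl⟩ w ((bruhatLT_simpleMul_left_iff cs (.inl i) w).mpr h)

theorem mul_simple_std_self (i : B) :
    K.mul (std (cs.simple i)) (std (cs.simple i)) =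
      (T 1 - T (-1) : ℤ[T;T⁻¹]) • std (cs.simple i) + std 1 := by
  simpa using mul_simple_std_of_gt K (i := i) (w := cs.simple i) (by simp)

theorem mul_std_simple_of_lt {i : B} {w : W} (h : cs.length w < cs.length (w * cs.simple i)) :
    K.mul (std w) (std (cs.simple i)) = std (w * cs.simple i) := by
  induction hn : cs.length w generalizing w with
  | zero => rw [cs.length_eq_zero_iff.mp hn, K.one_mul, one_mul]
  | succ n ih =>
    obtain ⟨j, hj⟩ := exists_length_simple_mul_lt cs (w := w) (by rintro rfl; simp at hn)
    obtain ⟨z, rfl⟩ : ∃ z, w = cs.simple j * z := ⟨cs.simple j * w, by simp⟩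
    rw [cs.simple_mul_simple_cancel_left] at hj
    have hz := cs.length_simple_mul z j
    have hzi := cs.length_mul_simple z i
    have hwi := cs.length_mul_simple (cs.simple j * z) i
    have hjzi := cs.length_simple_mul (z * cs.simple i) j
    rw [mul_assoc] at h hwi
    rw [← mul_simple_std_of_lt K hj, K.mul_assoc, ih (by omega) (by omega),
      mul_simple_std_of_lt K (by omega), mul_assoc]

theorem mul_std_simple_of_gt {i : B} {w : W} (h : cs.length (w * cs.simple i) < cs.length w) :
    K.mul (std w) (std (cs.simple i)) =
      (T 1 - T (-1) : ℤ[T;T⁻¹]) • std w + std (w * cs.simple i) := by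
  obtain ⟨z, rfl⟩ : ∃ z, w = z * cs.simple i := ⟨w * cs.simple i, by simp⟩
  rw [cs.simple_mul_simple_cancel_right] at h ⊢
  rw [← mul_std_simple_of_lt K h, K.mul_assoc, mul_simple_std_self, K.mul_add_right,
    K.mul_smul_right, K.mul_one]

variable (cs) in
/-- The element `H_s + v⁻¹` for `s = s_i`; by `klb_simple` it is the Kazhdan–Lusztig basis element
of `s`. -/
def klGen (i : B) : HMod W := std (cs.simple i) + (T (-1) : ℤ[T;T⁻¹]) • std 1

/-- Multiplication by `klGen cs i`, from the left for `Sum.inl i` and from the right for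
`Sum.inr i`. -/
def klGenMul : B ⊕ B → HMod W → HMod W
  | .inl i, h => K.mul (klGen cs i) h
  | .inr i, h => K.mul h (klGen cs i)

theorem klGenMul_add (σ : B ⊕ B) (g h : HMod W) :
    klGenMul K σ (g + h) = klGenMul K σ g + klGenMul K σ h := by
  rcases σ with i | i
  · exact K.mul_add_right _ _ _
  · exact K.mul_add_left _ _ _

theorem klGenMul_smul (σ : B ⊕ B) (r : ℤ[T;T⁻¹]) (h : HMod W) :
    klGenMul K σ (r • h) = r • klGenMul K σ h := by
  rcases σ with i | i
  · exact K.mul_smul_right _ _ _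
  · exact K.mul_smul_left _ _ _

theorem klGenMul_std (σ : B ⊕ B) (w : W) :
    klGenMul K σ (std w) = std (simpleMul cs σ w) +
      (if cs.length (simpleMul cs σ w) < cs.length w then T 1 else T (-1) : ℤ[T;T⁻¹]) • std w := by
  have hw := length_simpleMul cs σ w
  by_cases h : cs.length (simpleMul cs σ w) < cs.length w
  · rw [if_pos h]
    rcases σ with i | i <;> simp only [simpleMul] at h ⊢
    · rw [klGenMul, klGen, K.mul_add_left, K.mul_smul_left, K.one_mul, mul_simple_std_of_gt K h,
        sub_smul]
      abel
    · rw [klGenMul, klGen, K.mul_add_right, K.mul_smul_right, K.mul_one, mul_std_simple_of_gt K h,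
        sub_smul]
      abel
  · rw [if_neg h]
    rcases σ with i | i <;> simp only [simpleMul] at h hw ⊢
    · rw [klGenMul, klGen, K.mul_add_left, K.mul_smul_left, K.one_mul,
        mul_simple_std_of_lt K (by omega)]
    · rw [klGenMul, klGen, K.mul_add_right, K.mul_smul_right, K.mul_one,
        mul_std_simple_of_lt K (by omega)]

theorem klGenMul_apply (σ : B ⊕ B) (h : HMod W) (x : W) :
    klGenMul K σ h x = h (simpleMul cs σ x) +
      (if cs.length (simpleMul cs σ x) < cs.length x then T 1 else T (-1)) * h x := by
  induction h using Finsupp.induction_linear with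
  | zero => simpa using DFunLike.congr_fun (klGenMul_smul K σ 0 0) x
  | add f g hf hg =>
    rw [klGenMul_add, Finsupp.add_apply, hf, hg, Finsupp.add_apply, Finsupp.add_apply]
    ring
  | single y r =>
    rw [show (Finsupp.single y r : HMod W) = r • std y by simp [std], klGenMul_smul, klGenMul_std]
    simp only [std, Finsupp.smul_apply, Finsupp.add_apply, Finsupp.single_apply, smul_eq_mul,
      simpleMul_eq_iff]
    by_cases hyx : y = x
    · subst hyx
      simp only [if_true]
      ring
    · simp [hyx]

theorem bar_std_one : K.bar (std 1) = std 1 := by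
  rw [K.bar_std, inv_one, ← K.one_mul (K.sinv 1), K.mul_sinv]

theorem bar_std_simple (i : B) :
    K.bar (std (cs.simple i)) = klGen cs i + (-T 1 : ℤ[T;T⁻¹]) • std 1 := by
  have hinv : K.mul (std (cs.simple i)) (klGen cs i + (-T 1 : ℤ[T;T⁻¹]) • std 1) = std 1 := by
    rw [klGen, K.mul_add_right, K.mul_add_right, K.mul_smul_right, K.mul_smul_right, K.mul_one,
      mul_simple_std_self, sub_smul, neg_smul]
    abel
  calc K.bar (std (cs.simple i))
    _ = K.mul (K.sinv (cs.simple i)) (K.mul (std (cs.simple i)) _) := by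
      rw [K.bar_std, cs.inv_simple, hinv, K.mul_one]
    _ = klGen cs i + (-T 1 : ℤ[T;T⁻¹]) • std 1 := by rw [← K.mul_assoc, K.sinv_mul, K.one_mul]

theorem bar_klGen (i : B) : K.bar (klGen cs i) = klGen cs i := by
  conv_lhs => rw [klGen]
  rw [K.bar_add, K.bar_smul, bar_std_one, bar_std_simple, invert_T, neg_neg, add_assoc, ← add_smul,
    neg_add_cancel, zero_smul, add_zero]

theorem bar_klGenMul (σ : B ⊕ B) (h : HMod W) :
    K.bar (klGenMul K σ h) = klGenMul K σ (K.bar h) := by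
  rcases σ with i | i <;> rw [klGenMul, K.bar_mul, bar_klGen, klGenMul]

theorem bar_std_apply_of_length_le {x y : W} (h : cs.length x ≤ cs.length y) :
    K.bar (std x) y = std x y := by
  induction hn : cs.length x generalizing x y with
  | zero => rw [cs.length_eq_zero_iff.mp hn, bar_std_one]
  | succ n ih =>
    obtain ⟨i, hi⟩ := exists_length_simple_mul_lt cs (w := x) (by rintro rfl; simp at hn)
    obtain ⟨z, rfl⟩ : ∃ z, x = cs.simple i * z := ⟨cs.simple i * x, by simp⟩
    rw [cs.simple_mul_simple_cancel_left] at hi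
    have hz := cs.length_simple_mul z i
    have hy := cs.length_simple_mul y i
    have hzy : z ≠ y := by rintro rfl; omega
    have hbar : K.bar (std (cs.simple i * z)) =
        klGenMul K (.inl i) (K.bar (std z)) + (-T 1 : ℤ[T;T⁻¹]) • K.bar (std z) := by
      rw [← mul_simple_std_of_lt K hi, K.bar_mul, bar_std_simple, K.mul_add_left, K.mul_smul_left,
        K.one_mul, klGenMul]
    rw [hbar, Finsupp.add_apply, klGenMul_apply, Finsupp.smul_apply, simpleMul,
      ih (y := y) (by omega) (by omega), ih (y := cs.simple i * y) (by omega) (by omega)]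
    have := simpleMul_eq_iff cs (σ := .inl i) (x := z) (y := y)
    simp only [simpleMul] at this
    simp [std, Finsupp.single_apply, hzy, this]

theorem coeff_T_mul (m n : ℤ) (p : ℤ[T;T⁻¹]) : (T m * p).coeff n = p.coeff (n - m) := by
  rw [T, AddMonoidAlgebra.coeff_single_mul_eq_mul_coeff (m₂ := n - m) (H := by lia), one_mul]

theorem bar_apply (h : HMod W) (x : W) :
    K.bar h x = h.sum fun y a ↦ invert a * K.bar (std y) x := by
  let evalBar : HMod W →+ ℤ[T;T⁻¹] :=
    (Finsupp.applyAddHom x).comp (AddMonoidHom.mk' K.bar K.bar_add)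
  conv_lhs => rw [← h.sum_single]
  refine (map_finsuppSum evalBar h _).trans (Finsupp.sum_congr fun y _ ↦ ?_)
  change K.bar (Finsupp.single y (h y)) x = _
  rw [show (Finsupp.single y (h y) : HMod W) = h y • std y by simp [std], K.bar_smul]
  rfl

/-- On an element of maximal length in the support of `h` the bar involution acts by `invert`, and
no nonzero element of `v⁻¹ℤ[v⁻¹]` is fixed by `invert`. -/
theorem eq_zero_of_bar_eq_self {h : HMod W} (hbar : K.bar h = h)
    (hneg : ∀ x, ∀ n : ℤ, 0 ≤ n → (h x).coeff n = 0) : h = 0 := by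
  by_contra hne
  obtain ⟨x, hx, hmax⟩ :=
    h.support.exists_max_image cs.length (Finsupp.support_nonempty_iff.mpr hne)
  have hinv : invert (h x) = h x := by
    conv_rhs => rw [← hbar, bar_apply, Finsupp.sum]
    rw [Finset.sum_eq_single_of_mem x hx]
    · rw [bar_std_apply_of_length_le K le_rfl, std, Finsupp.single_eq_same, mul_one]
    · intro y hy hyx
      rw [bar_std_apply_of_length_le K (hmax y hy), std, Finsupp.single_eq_of_ne hyx.symm, mul_zero]
  refine Finsupp.mem_support_iff.mp hx (LaurentPolynomial.ext fun n ↦ ?_)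
  rcases le_total 0 n with hn | hn
  · simpa using hneg x n hn
  · rw [← hinv, invert_apply]
    simpa using hneg x (-n) (by lia)

theorem coeff_eq_zero_of_mem_span_T {p : ℤ[T;T⁻¹]}
    (hp : p ∈ Submodule.span ℤ ((fun n : ℤ ↦ (T n : ℤ[T;T⁻¹])) '' {n | n < 0})) {n : ℤ}
    (hn : 0 ≤ n) : p.coeff n = 0 := by
  induction hp using Submodule.span_induction with
  | mem _ h =>
    obtain ⟨m, hm, rfl⟩ := h
    rw [T_apply, if_neg (hm.trans_le hn).ne]
  | zero => rfl
  | add p q _ _ hp hq => rw [AddMonoidAlgebra.coeff_add, Finsupp.add_apply, hp, hq, add_zero]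
  | smul r p _ hp => rw [AddMonoidAlgebra.coeff_smul, Finsupp.smul_apply, hp, smul_zero]

theorem coeff_klb_of_nonneg (w x : W) {n : ℤ} (hn : 0 ≤ n) :
    (K.klb w x).coeff n = if n = 0 ∧ x = w then 1 else 0 := by
  by_cases hx : x = w
  · subst hx
    rw [K.klb_diag, ← T_zero, T_apply]
    simp only [and_true, eq_comm]
  · simpa [hx] using coeff_eq_zero_of_mem_span_T (K.klb_lower w x hx) hn

theorem klb_one : K.klb 1 = std 1 := by
  refine Finsupp.ext fun x ↦ ?_
  by_cases hx : x = 1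
  · simp [hx, K.klb_diag, std]
  · have hnot : ¬bruhatLE (Set.range cs.simple) x 1 := fun h ↦ by
      simpa [hx, eq_comm] using eq_or_length_lt_of_bruhatLE cs h
    simpa [std, Ne.symm hx] using not_imp_comm.mp (K.klb_supp 1 x) hnot

/-- The Kazhdan–Lusztig coefficient `μ(x, w)`: the coefficient of `v⁻¹` in `h_{x,w}`. -/
def klMu (x w : W) : ℤ := (K.klb w x).coeff (-1)

theorem length_lt_of_klMu_ne_zero {x w : W} (h : klMu K x w ≠ 0) : cs.length x < cs.length w := by
  have hx : K.klb w x ≠ 0 := fun h0 ↦ h (by rw [klMu, h0]; rfl)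
  refine (eq_or_length_lt_of_bruhatLE cs (K.klb_supp w x hx)).resolve_left ?_
  rintro rfl
  rw [klMu, K.klb_diag, ← T_zero, T_apply] at h
  exact h rfl

/-- The coefficients in the Kazhdan–Lusztig basis of the product of `h_w` with `h_s` on the side
prescribed by `σ`, for `w` such that this multiplication raises its length. -/
def klGenMulCoeff (σ : B ⊕ B) (w : W) : W →₀ ℤ :=
  Finsupp.single (simpleMul cs σ w) 1 +
    ((K.klb w).mapRange (fun p ↦ p.coeff (-1)) rfl).filter
      fun x ↦ cs.length (simpleMul cs σ x) < cs.length x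

theorem klGenMulCoeff_apply (σ : B ⊕ B) (w x : W) :
    klGenMulCoeff K σ w x = (if x = simpleMul cs σ w then 1 else 0) +
      if cs.length (simpleMul cs σ x) < cs.length x then klMu K x w else 0 := by
  rw [klGenMulCoeff, Finsupp.add_apply, Finsupp.single_apply, Finsupp.filter_apply,
    eq_comm (a := x)]
  rfl

theorem linearCombination_klb_apply (c : W →₀ ℤ) (x : W) :
    Finsupp.linearCombination ℤ K.klb c x = c.sum fun z a ↦ a • K.klb z x := by
  rw [Finsupp.linearCombination_apply, Finsupp.sum, Finsupp.finsetSum_apply]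
  rfl

theorem coeff_linearCombination_klb (c : W →₀ ℤ) (x : W) {n : ℤ} (hn : 0 ≤ n) :
    (Finsupp.linearCombination ℤ K.klb c x).coeff n = if n = 0 then c x else 0 := by
  rw [linearCombination_klb_apply, Finsupp.sum, AddMonoidAlgebra.coeff_sum,
    Finsupp.finsetSum_apply]
  simp only [AddMonoidAlgebra.coeff_smul, Finsupp.smul_apply, coeff_klb_of_nonneg K _ _ hn]
  split_ifs with h0
  · simp [h0, eq_comm]
  · simp [h0]

theorem coeff_klGenMul_klb {σ : B ⊕ B} {w : W} (hw : cs.length w < cs.length (simpleMul cs σ w))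
    (x : W) {n : ℤ} (hn : 0 ≤ n) :
    (klGenMul K σ (K.klb w) x).coeff n = if n = 0 then klGenMulCoeff K σ w x else 0 := by
  rw [klGenMul_apply, AddMonoidAlgebra.coeff_add, Finsupp.add_apply, coeff_klb_of_nonneg K _ _ hn,
    klGenMulCoeff_apply, simpleMul_eq_iff cs]
  by_cases hdesc : cs.length (simpleMul cs σ x) < cs.length x
  · have hxw : x ≠ w := by rintro rfl; exact hw.not_gt hdesc
    rw [if_pos hdesc, if_pos hdesc, coeff_T_mul]
    obtain rfl | hn := hn.eq_or_lt
    · simp [klMu]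
    · rw [coeff_klb_of_nonneg K _ _ (by lia)]
      simp [hn.ne', hxw]
  · rw [if_neg hdesc, if_neg hdesc, coeff_T_mul, coeff_klb_of_nonneg K _ _ (by lia),
      if_neg fun h : n - -1 = 0 ∧ x = w ↦ by lia, add_zero, add_zero, ite_and]

theorem bar_linearCombination_klb (c : W →₀ ℤ) :
    K.bar (Finsupp.linearCombination ℤ K.klb c) = Finsupp.linearCombination ℤ K.klb c := by
  let barHom : HMod W →+ HMod W := AddMonoidHom.mk' K.bar K.bar_add
  change barHom _ = _
  rw [Finsupp.linearCombination_apply, map_finsuppSum]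
  refine Finsupp.sum_congr fun z _ ↦ ?_
  rw [map_zsmul]
  exact congrArg _ (K.klb_bar z)

theorem klGenMul_klb {σ : B ⊕ B} {w : W} (hw : cs.length w < cs.length (simpleMul cs σ w)) :
    klGenMul K σ (K.klb w) = Finsupp.linearCombination ℤ K.klb (klGenMulCoeff K σ w) := by
  let barHom : HMod W →+ HMod W := AddMonoidHom.mk' K.bar K.bar_add
  refine sub_eq_zero.mp (eq_zero_of_bar_eq_self K ?_ fun x n hn ↦ ?_)
  · change barHom _ = _
    rw [map_sub]
    exact congrArg₂ _ (by rw [AddMonoidHom.mk'_apply, bar_klGenMul, K.klb_bar])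
      (bar_linearCombination_klb K _)
  · rw [Finsupp.sub_apply, AddMonoidAlgebra.coeff_sub, Finsupp.sub_apply,
      coeff_klGenMul_klb K hw x hn, coeff_linearCombination_klb K _ x hn, sub_self]

theorem klb_simple (i : B) : K.klb (cs.simple i) = klGen cs i := by
  have hcoeff : klGenMulCoeff K (.inl i) 1 = Finsupp.single (cs.simple i) 1 := by
    refine Finsupp.ext fun x ↦ ?_
    have hmu : klMu K x 1 = 0 := of_not_not fun h ↦ by
      simpa using length_lt_of_klMu_ne_zero K h
    simp [klGenMulCoeff_apply, hmu, simpleMul, Finsupp.single_apply, eq_comm]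
  have h := klGenMul_klb K (σ := .inl i) (w := 1) (by simp [simpleMul])
  rw [hcoeff, klb_one, klGenMul, K.mul_one, Finsupp.linearCombination_single, one_smul] at h
  exact h.symm

theorem suppKL_linearCombination_klb (c : W →₀ ℤ) :
    suppKL K (Finsupp.linearCombination ℤ K.klb c) = c.support := by
  have hexp : Finsupp.linearCombination ℤ K.klb c =
      (c.mapRange (C : ℤ →+* ℤ[T;T⁻¹]) (map_zero _)).sum fun y a ↦ a • K.klb y := by
    rw [Finsupp.linearCombination_apply,
      Finsupp.sum_mapRange_index (h := fun y (a : ℤ[T;T⁻¹]) ↦ a • K.klb y) fun y ↦ zero_smul _ _]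
    refine Finsupp.sum_congr fun y _ ↦ ?_
    rw [eq_intCast C, Int.cast_smul_eq_zsmul]
  have hC (x : W) : c.mapRange (C : ℤ →+* ℤ[T;T⁻¹]) (map_zero _) x ≠ 0 ↔ x ∈ c.support := by
    have hinj : Function.Injective (C : ℤ →+* ℤ[T;T⁻¹]) := fun a b h ↦ by
      simpa only [C_apply, if_true] using congrArg (fun p : ℤ[T;T⁻¹] ↦ p.coeff 0) h
    rw [Finsupp.mapRange_apply, map_ne_zero_iff C hinj, Finsupp.mem_support_iff]
  ext x
  rw [Finset.mem_coe, ← hC]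
  refine ⟨fun hx ↦ hx _ hexp, fun hx c' hc' ↦ ?_⟩
  rwa [(K.klb_basis _).unique hc' hexp]

theorem suppKL_klGenMul_klb {σ : B ⊕ B} {w : W}
    (hw : cs.length w < cs.length (simpleMul cs σ w)) :
    suppKL K (klGenMul K σ (K.klb w)) = {x | x = simpleMul cs σ w ∨
      cs.length (simpleMul cs σ x) < cs.length x ∧ klMu K x w ≠ 0} := by
  ext x
  rw [klGenMul_klb K hw, suppKL_linearCombination_klb, Finset.mem_coe, Finsupp.mem_support_iff,
    klGenMulCoeff_apply]
  by_cases hx : x = simpleMul cs σ w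
  · have hmu : klMu K x w = 0 := of_not_not fun h ↦
      (hx ▸ length_lt_of_klMu_ne_zero K h).not_gt hw
    simp [hx, hx ▸ hmu]
  · simp [hx]

theorem klb_simpleMul_apply [Fintype W] {σ : B ⊕ B} {w : W}
    (hw : cs.length w < cs.length (simpleMul cs σ w)) (x : W) :
    K.klb (simpleMul cs σ w) x = klGenMul K σ (K.klb w) x -
      ∑ z with cs.length (simpleMul cs σ z) < cs.length z, klMu K z w • K.klb z x := by
  rw [klGenMul_klb K hw, linearCombination_klb_apply,
    Finsupp.sum_fintype _ (fun z a ↦ a • K.klb z x) fun z ↦ zero_smul _ _]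
  simp only [klGenMulCoeff_apply, add_smul, ite_smul, one_smul, zero_smul, Finset.sum_add_distrib,
    Finset.sum_ite_eq', Finset.mem_univ, if_true, Finset.sum_filter, add_sub_cancel_right]

variable (cs) in
/-- The condition in the recursion for `f_W` under which the simple reflection and side `σ`
contribute the value `G = F(σx)` to `f_W(x)`; here `F` stands for the values of `f_W` found so
far. -/
def Contributes (F : W → Option (Set W)) (σ : B ⊕ B) (x : W) (G : Set W) : Prop :=
  cs.length (simpleMul cs σ x) < cs.length x ∧ F (simpleMul cs σ x) = some G ∧
    ∀ w ∈ G, cs.length w < cs.length (simpleMul cs σ w)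

/-- The family of sets whose intersection is `f_W(x)`, computed from values `F` at shorter
elements. -/
def contributions (F : W → Option (Set W)) (x : W) : Set (Set W) :=
  {U | ∃ σ G, Contributes cs F σ x G ∧ U = ⋃ w ∈ G, suppKL K (klGenMul K σ (K.klb w))}

theorem contributions_nonempty {F : W → Option (Set W)} {x : W} :
    (contributions K F x).Nonempty ↔ ∃ σ G, Contributes cs F σ x G :=
  ⟨fun ⟨_, σ, G, h, _⟩ ↦ ⟨σ, G, h⟩, fun ⟨σ, G, h⟩ ↦ ⟨_, σ, G, h, rfl⟩⟩

theorem mem_sInter_contributions {F : W → Option (Set W)} {x y : W} :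
    y ∈ ⋂₀ contributions K F x ↔ ∀ σ G, Contributes cs F σ x G →
      ∃ w ∈ G, y ∈ suppKL K (klGenMul K σ (K.klb w)) := by
  simp only [contributions, Set.mem_sInter, Set.mem_ofPred_eq, forall_exists_index, and_imp]
  refine ⟨fun h σ G hG ↦ by simpa using h _ σ G hG rfl, ?_⟩
  rintro h _ σ G hG rfl
  simpa using h σ G hG

/-- One step of the recursion for `f_W`: the value at `x` computed from values `F` at shorter
elements. -/
def fStep (F : W → Option (Set W)) (x : W) : Option (Set W) :=
  if x = 1 then some {1} else
    if (contributions K F x).Nonempty then some (⋂₀ contributions K F x) else none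

theorem fStep_congr {F F' : W → Option (Set W)} {x : W}
    (h : ∀ y, cs.length y < cs.length x → F y = F' y) : fStep K F x = fStep K F' x := by
  have hiff (σ : B ⊕ B) (G : Set W) : Contributes cs F σ x G ↔ Contributes cs F' σ x G :=
    and_congr_right fun hσ ↦ by rw [h _ hσ]
  have hcontr : contributions K F x = contributions K F' x := by simp only [contributions, hiff]
  rw [fStep, hcontr, fStep]

theorem contributes_inl_iff {F : W → Option (Set W)} {i : B} {x : W} {G : Set W} :
    Contributes cs F (.inl i) x G ↔
      bruhatLT (Set.range cs.simple) (cs.simple i * x) x ∧ F (cs.simple i * x) = some G ∧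
        upLeft (Set.range cs.simple) (cs.simple i) G = G := by
  rw [Contributes, ← bruhatLT_simpleMul_left_iff, upLeft, Set.sep_eq_self_iff_mem_true]
  exact and_congr_right' <| and_congr_right' <| forall₂_congr fun w _ ↦
    (bruhatLT_simpleMul_iff cs (.inl i) w).symm

theorem contributes_inr_iff {F : W → Option (Set W)} {i : B} {x : W} {G : Set W} :
    Contributes cs F (.inr i) x G ↔
      bruhatLT (Set.range cs.simple) (x * cs.simple i) x ∧ F (x * cs.simple i) = some G ∧
        upRight (Set.range cs.simple) (cs.simple i) G = G := by
  rw [Contributes, ← bruhatLT_simpleMul_left_iff, upRight, Set.sep_eq_self_iff_mem_true]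
  exact and_congr_right' <| and_congr_right' <| forall₂_congr fun w _ ↦
    (bruhatLT_simpleMul_iff cs (.inr i) w).symm

theorem fAux_one (n : ℕ) : fAux K n 1 = some {1} := by
  cases n <;> rw [fAux, if_pos rfl]

theorem fAux_succ (n : ℕ) (x : W) : fAux K (n + 1) x = fStep K (fAux K n) x := by
  have hex : ((∃ s ∈ Set.range cs.simple, bruhatLT (Set.range cs.simple) (s * x) x ∧
        ∃ G, fAux K n (s * x) = some G ∧ upLeft (Set.range cs.simple) s G = G) ∨
      ∃ t ∈ Set.range cs.simple, bruhatLT (Set.range cs.simple) (x * t) x ∧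
        ∃ G, fAux K n (x * t) = some G ∧ upRight (Set.range cs.simple) t G = G) ↔
      (contributions K (fAux K n) x).Nonempty := by
    simp only [contributions_nonempty, Sum.exists, contributes_inl_iff, contributes_inr_iff,
      Set.exists_range_iff, exists_and_left]
  rw [fAux, fStep, if_congr hex _ rfl]
  congr 2
  ext y
  simp only [mem_sInter_contributions, Set.mem_inter_iff, Set.mem_iInter, Set.mem_iUnion,
    Set.mem_ofPred_eq, Sum.forall, contributes_inl_iff, contributes_inr_iff, Set.forall_mem_range,
    klGenMul, klb_simple, exists_prop]

theorem fAux_eq_of_length_le {m n : ℕ} {x : W} (hm : cs.length x ≤ m) (hn : cs.length x ≤ n) :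
    fAux K m x = fAux K n x := by
  induction m generalizing n x with
  | zero => rw [cs.length_eq_zero_iff.mp (Nat.le_zero.mp hm), fAux_one, fAux_one]
  | succ m ih =>
    rcases n with _ | n
    · rw [cs.length_eq_zero_iff.mp (Nat.le_zero.mp hn), fAux_one, fAux_one]
    · rw [fAux_succ, fAux_succ]
      exact fStep_congr K fun y hy ↦ ih (by lia) (by lia)

theorem fW_eq_fStep (x : W) : fW K x = fStep K (fW K) x := by
  rw [fW, wordLength_range_simple, fAux_eq_of_length_le K le_rfl (Nat.le_succ _), fAux_succ]
  refine fStep_congr K fun y hy ↦ ?_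
  rw [fW, wordLength_range_simple, fAux_eq_of_length_le K hy.le le_rfl]

end Hecke

section CoefficientList

/-- The polynomial in `v⁻¹` with the given list of coefficients, constant term first. -/
def negEval : List ℤ → ℤ[T;T⁻¹]
  | [] => 0
  | a :: p => C a + T (-1) * negEval p

/-- Addition of polynomials given by lists of coefficients. -/
def coeffAdd : List ℤ → List ℤ → List ℤ
  | [], q => q
  | p, [] => p
  | a :: p, b :: q => (a + b) :: coeffAdd p q

theorem negEval_coeffAdd (p q : List ℤ) : negEval (coeffAdd p q) = negEval p + negEval q := by
  fun_induction coeffAdd p q with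
  | case1 q => rw [negEval, zero_add]
  | case2 p => rw [negEval, add_zero]
  | case3 a p b q ih => rw [negEval, negEval, negEval, ih, map_add]; ring

theorem negEval_map_mul (c : ℤ) (p : List ℤ) : negEval (p.map (c * ·)) = C c * negEval p := by
  induction p with
  | nil => rw [List.map_nil, negEval, mul_zero]
  | cons a p ih => rw [List.map_cons, negEval, negEval, ih, map_mul]; ring

theorem negEval_zero_cons (p : List ℤ) : negEval (0 :: p) = T (-1) * negEval p := by
  rw [negEval, map_zero, zero_add]

theorem coeff_negEval_of_pos (p : List ℤ) {n : ℤ} (hn : 0 < n) : (negEval p).coeff n = 0 := by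
  induction p generalizing n with
  | nil => rfl
  | cons a p ih =>
    rw [negEval, AddMonoidAlgebra.coeff_add, Finsupp.add_apply, C_apply, if_neg hn.ne', coeff_T_mul,
      ih (by lia), add_zero]

theorem coeff_negEval (p : List ℤ) (k : ℕ) : (negEval p).coeff (-k) = p.getD k 0 := by
  induction p generalizing k with
  | nil => rfl
  | cons a p ih =>
    rw [negEval, AddMonoidAlgebra.coeff_add, Finsupp.add_apply, C_apply, coeff_T_mul]
    rcases k with _ | k
    · rw [coeff_negEval_of_pos p (by simp)]
      simp
    · rw [if_neg (by lia), zero_add, List.getD_cons_succ, ← ih]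
      congr 1
      push_cast
      ring

theorem negEval_tail {p : List ℤ} (hp : (negEval p).coeff 0 = 0) :
    negEval p.tail = T 1 * negEval p := by
  rcases p with _ | ⟨a, p⟩
  · rw [List.tail_nil, negEval, mul_zero]
  · obtain rfl : a = 0 := by simpa using (coeff_negEval (a :: p) 0).symm.trans hp
    rw [List.tail_cons, negEval_zero_cons, ← mul_assoc, ← T_add, add_neg_cancel, T_zero, one_mul]

end CoefficientList

section Table

variable {n : ℕ} {α : Type*}

/-- The list of values of a function on `Fin n` defined by course-of-values recursion: `next R i` is
its value at `i`, given the list `R` of its values at all `j < i`. -/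
def valueTable (next : List α → Fin n → α) : List α :=
  (List.finRange n).foldl (fun R i ↦ R ++ [next R i]) []

theorem valueTable_succ (next : List α → Fin (n + 1) → α) :
    valueTable next = valueTable (fun R i ↦ next R i.castSucc) ++
      [next (valueTable fun R i ↦ next R i.castSucc) (Fin.last n)] := by
  rw [valueTable, List.finRange_succ_last, List.foldl_append, List.foldl_map]
  rfl

theorem length_valueTable (next : List α → Fin n → α) : (valueTable next).length = n := by
  induction n with
  | zero => rfl
  | succ n ih => rw [valueTable_succ, List.length_append, ih, List.length_singleton]

theorem valueTable_getD {next : List α → Fin n → α} {P : Fin n → α → Prop} {d : α}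
    (hnext : ∀ R i, (∀ j < i, P j (R.getD j d)) → P i (next R i)) (i : Fin n) :
    P i ((valueTable next).getD i d) := by
  induction n with
  | zero => exact i.elim0
  | succ n ih =>
    have hprefix (j : Fin n) :
        P j.castSucc ((valueTable fun R i ↦ next R i.castSucc).getD j d) := by
      refine ih (P := fun j ↦ P j.castSucc) (fun R i hR ↦ hnext R _ fun j hj ↦ ?_) j
      obtain ⟨j, rfl⟩ := Fin.exists_castSucc_eq.mpr (Fin.ne_last_of_lt hj)
      exact hR j hj
    rw [valueTable_succ]
    cases i using Fin.lastCases with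
    | last =>
      rw [Fin.val_last, List.getD_append_right _ _ _ _ (length_valueTable _).le,
        length_valueTable, Nat.sub_self, List.getD_cons_zero]
      refine hnext _ _ fun j hj ↦ ?_
      obtain ⟨j, rfl⟩ := Fin.exists_castSucc_eq.mpr hj.ne
      exact hprefix j
    | cast j =>
      rw [Fin.val_castSucc, List.getD_append _ _ _ _ (by rw [length_valueTable]; exact j.isLt)]
      exact hprefix j

end Table

section KLTable

/-- The two actions of `r` simple reflections on `n` elements (on the left for `Sum.inl`, on the
right for `Sum.inr`) and the lengths of these elements, as computable data. -/
structure MulTable (r n : ℕ) where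
  act : Fin r ⊕ Fin r → Fin n → Fin n
  len : Fin n → ℕ

namespace MulTable

variable {r n : ℕ} (T : MulTable r n)

/-- Acting by `σ` lowers the length of `x`. -/
def IsDesc (σ : Fin r ⊕ Fin r) (x : Fin n) : Prop := T.len (T.act σ x) < T.len x

instance (σ : Fin r ⊕ Fin r) (x : Fin n) : Decidable (T.IsDesc σ x) :=
  inferInstanceAs (Decidable (_ < _))

/-- The entry at `x` of a row, which lists the coefficients of `h_{x,w}` for fixed `w`. -/
def entry (row : List (List ℤ)) (x : Fin n) : List ℤ := row.getD x []

/-- The coefficient of `H_x` in `h_s h_w` (or `h_w h_s`, depending on the side of `σ`), from the row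
of `w`. -/
def mulEntry (σ : Fin r ⊕ Fin r) (row : List (List ℤ)) (x : Fin n) : List ℤ :=
  coeffAdd (entry row (T.act σ x)) (if T.IsDesc σ x then (entry row x).tail else 0 :: entry row x)

/-- The coefficient `μ(x, w)`, from the row of `w`. -/
def mu (row : List (List ℤ)) (x : Fin n) : ℤ := (entry row x).getD 1 0

/-- The elements `x` with `μ(x, w) ≠ 0`, from the row of `w`. -/
def muSupport (row : List (List ℤ)) : List (Fin n) := (List.finRange n).filter fun x ↦ mu row x ≠ 0

/-- The row of `i`, computed from the rows of the preceding elements by the Kazhdan–Lusztig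
recursion for a left descent of `i`. -/
def nextRow (rows : List (List (List ℤ))) (i : Fin n) : List (List ℤ) :=
  match (List.finRange r).find? fun j ↦ T.IsDesc (.inl j) i with
  | none => (List.finRange n).map fun x ↦ if x = i then [1] else []
  | some j =>
    let row := rows.getD (T.act (.inl j) i) []
    (List.finRange n).map fun x ↦
      ((muSupport row).filter fun z : Fin n ↦ T.IsDesc (.inl j) z).foldr
        (fun (z : Fin n) p ↦ coeffAdd p ((entry (rows.getD z []) x).map (-mu row z * ·)))
        (T.mulEntry (.inl j) row x)

/-- The table of the coefficients of all `h_{x,w}`. -/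
def rowTable : List (List (List ℤ)) := valueTable T.nextRow

/-- The table of the elements `x` with `μ(x, w) ≠ 0`. It is stored separately from `rowTable` so
that evaluation computes it only once. -/
def muTable : List (List (Fin n)) := T.rowTable.map muSupport

/-- The table `T` describes the multiplication by simple reflections in the group of `cs` under the
enumeration `e` of its elements, which is compatible with the length. -/
structure Represents {W : Type*} [Group W] {M : CoxeterMatrix (Fin r)} (cs : CoxeterSystem M W)
    (e : Fin n ≃ W) : Prop where
  map_act : ∀ σ i, e (T.act σ i) = simpleMul cs σ (e i)
  len_eq : ∀ i, T.len i = cs.length (e i)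
  lt_of_len_lt : ∀ i j, T.len i < T.len j → i < j

variable {T} {W : Type*} [Group W] {M : CoxeterMatrix (Fin r)} {cs : CoxeterSystem M W}
  {e : Fin n ≃ W}

theorem Represents.isDesc_iff (hT : T.Represents cs e) {σ : Fin r ⊕ Fin r} {i : Fin n} :
    T.IsDesc σ i ↔ cs.length (simpleMul cs σ (e i)) < cs.length (e i) := by
  rw [IsDesc, hT.len_eq, hT.len_eq, hT.map_act]

theorem Represents.not_isDesc_iff (hT : T.Represents cs e) {σ : Fin r ⊕ Fin r} {i : Fin n} :
    ¬T.IsDesc σ i ↔ cs.length (e i) < cs.length (simpleMul cs σ (e i)) := by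
  have := length_simpleMul cs σ (e i)
  rw [hT.isDesc_iff]
  lia

variable {K : KLData (Set.range cs.simple)}

variable (e K) in
/-- The row `row` lists the coefficients of the Kazhdan–Lusztig basis element of `e w`. -/
def IsRow (w : Fin n) (row : List (List ℤ)) : Prop :=
  ∀ x, negEval (entry row x) = K.klb (e w) (e x)

theorem IsRow.mu_eq {w : Fin n} {row : List (List ℤ)} (hrow : IsRow e K w row) (x : Fin n) :
    mu row x = klMu K (e x) (e w) := by
  rw [klMu, ← hrow x, mu, ← coeff_negEval, Nat.cast_one]

theorem IsRow.negEval_mulEntry (hT : T.Represents cs e) {σ : Fin r ⊕ Fin r} {w : Fin n}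
    {row : List (List ℤ)} (hrow : IsRow e K w row) (hw : ¬T.IsDesc σ w) (x : Fin n) :
    negEval (T.mulEntry σ row x) = klGenMul K σ (K.klb (e w)) (e x) := by
  rw [mulEntry, negEval_coeffAdd, hrow, hT.map_act, klGenMul_apply]
  congr 1
  by_cases hx : T.IsDesc σ x
  · have hxw : e x ≠ e w := fun h ↦ hw (e.injective h ▸ hx)
    have hcoeff := coeff_klb_of_nonneg K (e w) (e x) le_rfl
    rw [if_pos hx, if_pos (hT.isDesc_iff.mp hx), negEval_tail, hrow]
    rw [hrow, hcoeff, if_neg fun h ↦ hxw h.2]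
  · rw [if_neg hx, if_neg (mt hT.isDesc_iff.mpr hx), negEval_zero_cons, hrow]

theorem entry_map_finRange (f : Fin n → List ℤ) (x : Fin n) :
    entry ((List.finRange n).map f) x = f x := by
  simp [entry, List.getD]

theorem negEval_foldr_coeffAdd {ι : Type*} (f : ι → List ℤ) (p : List ℤ) (l : List ι) :
    negEval (l.foldr (fun z q ↦ coeffAdd q (f z)) p) =
      negEval p + (l.map fun z ↦ negEval (f z)).sum := by
  induction l with
  | nil => simp
  | cons z l ih =>
    rw [List.foldr_cons, negEval_coeffAdd, ih, List.map_cons, List.sum_cons]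
    ring

theorem Represents.sum_map_muSupport (hT : T.Represents cs e) {σ : Fin r ⊕ Fin r} {w : Fin n}
    {row : List (List ℤ)} {rows : List (List (List ℤ))} (hrow : IsRow e K w row)
    (hrows : ∀ z < w, IsRow e K z (rows.getD z [])) [Fintype W] (x : Fin n) :
    (((muSupport row).filter fun z : Fin n ↦ T.IsDesc σ z).map fun z : Fin n ↦
      negEval ((entry (rows.getD z []) x).map (-mu row z * ·))).sum =
    -∑ z with cs.length (simpleMul cs σ z) < cs.length z, klMu K z (e w) • K.klb z (e x) := by
  have hnodup : ((muSupport row).filter fun z : Fin n ↦ T.IsDesc σ z).Nodup :=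
    ((List.nodup_finRange n).filter _).filter _
  have hterm (z : Fin n) (hz : mu row z ≠ 0) :
      negEval ((entry (rows.getD z []) x).map (-mu row z * ·)) =
        -(klMu K (e z) (e w) • K.klb (e z) (e x)) := by
    rw [hrow.mu_eq] at hz ⊢
    have hzw : z < w := hT.lt_of_len_lt z w <| by
      simpa only [hT.len_eq] using length_lt_of_klMu_ne_zero K hz
    rw [negEval_map_mul, hrows z hzw, eq_intCast C, Int.cast_neg, neg_mul, zsmul_eq_mul]
  rw [← List.sum_toFinset _ hnodup, ← Finset.sum_neg_distrib, Finset.sum_filter, ← e.sum_comp]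
  have hfinset : ((muSupport row).filter fun z : Fin n ↦ T.IsDesc σ z).toFinset =
      ({z | mu row z ≠ 0 ∧ T.IsDesc σ z} : Finset (Fin n)) := by
    ext z
    simp [muSupport, and_comm]
  rw [hfinset, Finset.sum_filter]
  refine Finset.sum_congr rfl fun z _ ↦ ?_
  by_cases hmu : mu row z = 0
  · simp [hmu, (hrow.mu_eq z).symm.trans hmu]
  · simp only [hmu, ne_eq, not_false_eq_true, true_and, hT.isDesc_iff, hterm z hmu]

theorem Represents.isRow_nextRow (hT : T.Represents cs e) {rows : List (List (List ℤ))} {i : Fin n}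
    (hrows : ∀ w < i, IsRow e K w (rows.getD w [])) : IsRow e K i (T.nextRow rows i) := by
  intro x
  rw [nextRow]
  split
  · next hnone =>
    have hi : e i = 1 := by
      by_contra hi
      obtain ⟨j, hj⟩ := exists_length_simple_mul_lt cs hi
      exact List.find?_eq_none.mp hnone j (List.mem_finRange j)
        (decide_eq_true (hT.isDesc_iff (σ := .inl j).mpr hj))
    rw [entry_map_finRange, hi, klb_one, std, Finsupp.single_apply, ← hi, e.apply_eq_iff_eq,
      eq_comm (a := i)]
    split_ifs <;> simp [negEval]
  · next j hj =>
    have hdesc : T.IsDesc (.inl j) i := by simpa only [decide_eq_true_eq] using List.find?_some hj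
    let w := T.act (.inl j) i
    have hwi : w < i := hT.lt_of_len_lt w i hdesc
    have hiw : e i = simpleMul cs (.inl j) (e w) := by
      rw [hT.map_act, simpleMul_involutive]
    have hw : ¬T.IsDesc (.inl j) w := by
      rw [hT.not_isDesc_iff, ← hiw, hT.map_act]
      exact hT.isDesc_iff.mp hdesc
    have := Fintype.ofEquiv _ e
    rw [entry_map_finRange, negEval_foldr_coeffAdd, (hrows w hwi).negEval_mulEntry hT hw,
      hT.sum_map_muSupport (hrows w hwi) (fun z hz ↦ hrows z (hz.trans hwi)), hiw,
      klb_simpleMul_apply K (hT.not_isDesc_iff.mp hw), sub_eq_add_neg]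

theorem Represents.isRow_rowTable (hT : T.Represents cs e) (w : Fin n) :
    IsRow e K w (T.rowTable.getD w []) :=
  valueTable_getD (fun _ _ ↦ hT.isRow_nextRow) w

theorem Represents.mem_muTable_iff (hT : T.Represents cs e) {x w : Fin n} :
    x ∈ T.muTable.getD w (muSupport []) ↔ klMu K (e x) (e w) ≠ 0 := by
  rw [muTable, List.getD_map, muSupport, List.mem_filter, decide_eq_true_eq,
    (hT.isRow_rowTable (K := K) w).mu_eq]
  exact and_iff_right (List.mem_finRange x)

variable (T) in
/-- The KL-support of `h_s h_w` (or `h_w h_s`, depending on the side of `σ`). -/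
def supp (σ : Fin r ⊕ Fin r) (w : Fin n) : List (Fin n) :=
  T.act σ w :: (T.muTable.getD w (muSupport [])).filter fun x ↦ T.IsDesc σ x

variable (T) in
/-- The set that `σ` contributes to the intersection defining `f_W(i)`, if it does, given the
table `F` of the preceding values of `f_W`. -/
def contribution (F : List (Option (List (Fin n)))) (i : Fin n) (σ : Fin r ⊕ Fin r) :
    Option (List (Fin n)) :=
  if T.IsDesc σ i then
    (F.getD (T.act σ i) none).bind fun G ↦
      if ∀ w ∈ G, ¬T.IsDesc σ w then some (G.flatMap (T.supp σ)) else none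
  else none

variable (T) in
/-- All sets contributing to the intersection defining `f_W(i)`, given the table `F` of the
preceding values of `f_W`. -/
def contributionList (F : List (Option (List (Fin n)))) (i : Fin n) : List (List (Fin n)) :=
  ((List.finRange r).map Sum.inl ++ (List.finRange r).map Sum.inr).filterMap (T.contribution F i)

variable (T) in
/-- The value of `f_W` at `i`, given the table `F` of its preceding values. -/
def nextValue (F : List (Option (List (Fin n)))) (i : Fin n) : Option (List (Fin n)) :=
  if T.len i = 0 then some [i] else
    let L := T.contributionList F i
    if L = [] then none else some ((List.finRange n).filter fun x ↦ ∀ l ∈ L, x ∈ l)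

variable (T) in
/-- The table of the values of `f_W`. -/
def fTable : List (Option (List (Fin n))) := valueTable T.nextValue

theorem Represents.mem_supp_iff (hT : T.Represents cs e) {σ : Fin r ⊕ Fin r} {x w : Fin n}
    (hw : ¬T.IsDesc σ w) :
    x ∈ T.supp σ w ↔ e x ∈ suppKL K (klGenMul K σ (K.klb (e w))) := by
  rw [suppKL_klGenMul_klb K (hT.not_isDesc_iff.mp hw), supp, List.mem_cons, List.mem_filter,
    hT.mem_muTable_iff (K := K), decide_eq_true_eq, hT.isDesc_iff, ← hT.map_act σ w,
    Set.mem_ofPred_eq, e.apply_eq_iff_eq, and_comm]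

variable (e K) in
/-- `o` lists the elements of the set `f_W(e i)`, or is `none` if `f_W` is not defined there. -/
def IsValue (i : Fin n) (o : Option (List (Fin n))) : Prop :=
  fW K (e i) = o.map fun l ↦ e '' {x | x ∈ l}

theorem Represents.contributes_iff (hT : T.Represents cs e) {i : Fin n}
    {F : List (Option (List (Fin n)))} (hF : ∀ j < i, IsValue e K j (F.getD j none))
    {σ : Fin r ⊕ Fin r} {A : Set W} :
    Contributes cs (fW K) σ (e i) A ↔ T.IsDesc σ i ∧ ∃ G, F.getD (T.act σ i) none = some G ∧
      (∀ w ∈ G, ¬T.IsDesc σ w) ∧ A = e '' {x | x ∈ G} := by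
  rw [Contributes, ← hT.isDesc_iff, ← hT.map_act]
  refine and_congr_right fun hσ ↦ ?_
  rw [hF _ (hT.lt_of_len_lt _ _ hσ)]
  simp only [Option.map_eq_some_iff, hT.not_isDesc_iff]
  constructor
  · rintro ⟨⟨G, hG, rfl⟩, hasc⟩
    exact ⟨G, hG, fun w hw ↦ hasc _ (Set.mem_image_of_mem e hw), rfl⟩
  · rintro ⟨G, hG, hasc, rfl⟩
    exact ⟨⟨G, hG, rfl⟩, Set.forall_mem_image.mpr hasc⟩

theorem contribution_eq_some_iff {F : List (Option (List (Fin n)))} {i : Fin n}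
    {σ : Fin r ⊕ Fin r} {l : List (Fin n)} :
    T.contribution F i σ = some l ↔ T.IsDesc σ i ∧ ∃ G, F.getD (T.act σ i) none = some G ∧
      (∀ w ∈ G, ¬T.IsDesc σ w) ∧ G.flatMap (T.supp σ) = l := by
  simp [contribution, Option.bind_eq_some_iff]

theorem mem_contributionList {F : List (Option (List (Fin n)))} {i : Fin n} {l : List (Fin n)} :
    l ∈ T.contributionList F i ↔ ∃ σ, T.contribution F i σ = some l := by
  simp [contributionList]

theorem Represents.image_flatMap_supp (hT : T.Represents cs e) {σ : Fin r ⊕ Fin r}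
    {G : List (Fin n)} (hG : ∀ w ∈ G, ¬T.IsDesc σ w) :
    e '' {x | x ∈ G.flatMap (T.supp σ)} =
      ⋃ w ∈ e '' {x | x ∈ G}, suppKL K (klGenMul K σ (K.klb w)) := by
  ext y
  obtain ⟨x, rfl⟩ := e.surjective y
  simp only [e.injective.mem_set_image, Set.mem_ofPred_eq, List.mem_flatMap, Set.biUnion_image,
    Set.mem_iUnion, exists_prop]
  exact exists_congr fun w ↦ and_congr_right fun hw ↦ hT.mem_supp_iff (hG w hw)

theorem Represents.contributions_eq (hT : T.Represents cs e) {i : Fin n}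
    {F : List (Option (List (Fin n)))} (hF : ∀ j < i, IsValue e K j (F.getD j none)) :
    contributions K (fW K) (e i) =
      (fun l ↦ e '' {x | x ∈ l}) '' {l | l ∈ T.contributionList F i} := by
  ext U
  simp only [contributions, hT.contributes_iff hF, Set.mem_ofPred_eq, Set.mem_image,
    mem_contributionList, contribution_eq_some_iff]
  constructor
  · rintro ⟨σ, _, ⟨hσ, G, hFG, hG, rfl⟩, rfl⟩
    exact ⟨_, ⟨σ, hσ, G, hFG, hG, rfl⟩, hT.image_flatMap_supp hG⟩
  · rintro ⟨_, ⟨σ, hσ, G, hFG, hG, rfl⟩, rfl⟩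
    exact ⟨σ, _, ⟨hσ, G, hFG, hG, rfl⟩, hT.image_flatMap_supp hG⟩

theorem Represents.isValue_nextValue (hT : T.Represents cs e) {i : Fin n}
    {F : List (Option (List (Fin n)))} (hF : ∀ j < i, IsValue e K j (F.getD j none)) :
    IsValue e K i (T.nextValue F i) := by
  rw [IsValue, fW_eq_fStep, fStep, hT.contributions_eq hF, nextValue, hT.len_eq]
  by_cases hi : e i = 1
  · simp [hi]
  rw [if_neg hi, if_neg (mt cs.length_eq_zero_iff.mp hi)]
  by_cases hL : T.contributionList F i = []
  · simp [hL]
  · have hne : {l | l ∈ T.contributionList F i}.Nonempty := List.exists_mem_of_ne_nil _ hL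
    rw [if_pos (hne.image _)]
    simp only [hL, if_false, Option.map_some, Option.some_inj]
    ext y
    obtain ⟨x, rfl⟩ := e.surjective y
    simp

theorem Represents.isValue_fTable (hT : T.Represents cs e) (i : Fin n) :
    IsValue e K i (T.fTable.getD i none) :=
  valueTable_getD (fun _ _ ↦ hT.isValue_nextValue) i

theorem Represents.fW_eq_none_iff (hT : T.Represents cs e) {i : Fin n} :
    fW K (e i) = none ↔ T.fTable.getD i none = none := by
  rw [hT.isValue_fTable i, Option.map_eq_none_iff]

theorem Represents.separated_iff (hT : T.Represents cs e) {i : Fin n} :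
    Separated K (e i) ↔ (T.fTable.getD i none).map List.toFinset = some {i} := by
  rw [Separated, hT.isValue_fTable i, Option.map_eq_some_iff, Option.map_eq_some_iff]
  refine exists_congr fun l ↦ and_congr_right fun _ ↦ ?_
  rw [← Set.image_singleton, e.injective.image_injective.eq_iff, Set.ext_iff, Finset.ext_iff]
  simp

end MulTable

end KLTable

section Enumeration

variable {r n : ℕ}

/-- Adding a letter to a word, on the left for `Sum.inl` and on the right for `Sum.inr`. -/
def addLetter {B : Type*} : B ⊕ B → List B → List B
  | .inl j, ω => j :: ω
  | .inr j, ω => ω ++ [j]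

theorem wordProd_addLetter {B W : Type*} [Group W] {M : CoxeterMatrix B} (cs : CoxeterSystem M W)
    (σ : B ⊕ B) (ω : List B) : cs.wordProd (addLetter σ ω) = simpleMul cs σ (cs.wordProd ω) := by
  rcases σ with j | j <;> simp [addLetter, simpleMul, CoxeterSystem.wordProd]

namespace MulTable

/-- The left action of the table `T` satisfies the relations of the Coxeter matrix `M`, the words
`word i` are the geodesics from `o` to `i` and determine the lengths, and the numbering is by
increasing length. -/
structure IsCoxeterTable (T : MulTable r n) (M : CoxeterMatrix (Fin r)) (o : Fin n)
    (word : Fin n → List (Fin r)) : Prop where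
  iterate_act : ∀ j k i, (T.act (.inl j) ∘ T.act (.inl k))^[M j k] i = i
  foldr_word : ∀ i, (word i).foldr (fun j ↦ T.act (.inl j)) o = i
  len_origin : T.len o = 0
  len_eq_length : ∀ i, T.len i = (word i).length
  len_act_le : ∀ j i, T.len (T.act (.inl j) i) ≤ T.len i + 1
  lt_of_len_lt : ∀ i j, T.len i < T.len j → i < j

variable {T : MulTable r n} {M : CoxeterMatrix (Fin r)} {o : Fin n} {word : Fin n → List (Fin r)}

theorem IsCoxeterTable.len_foldr_le (hT : T.IsCoxeterTable M o word) (ω : List (Fin r)) :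
    T.len (ω.foldr (fun j ↦ T.act (.inl j)) o) ≤ ω.length := by
  induction ω with
  | nil => exact hT.len_origin.le
  | cons j ω ih => exact (hT.len_act_le j _).trans (Nat.succ_le_succ ih)

theorem IsCoxeterTable.exists_orbitMap (hT : T.IsCoxeterTable M o word) {W : Type*} [Group W]
    (cs : CoxeterSystem M W) :
    ∃ f : W → Fin n, ∀ ω, f (cs.wordProd ω) = ω.foldr (fun j ↦ T.act (.inl j)) o := by
  let g (j : Fin r) : Function.End (Fin n) := T.act (.inl j)
  have hlift : M.IsLiftable g := fun j k ↦ funext fun i ↦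
    (smul_iterate_apply (g j * g k) (M j k) i).symm.trans (hT.iterate_act j k i)
  refine ⟨fun w ↦ cs.lift ⟨g, hlift⟩ w o, fun ω ↦ ?_⟩
  beta_reduce
  induction ω with
  | nil => rw [cs.wordProd_nil, map_one]; rfl
  | cons j ω ih =>
    rw [cs.wordProd_cons, map_mul, cs.lift_apply_simple hlift, List.foldr_cons, ← ih]
    rfl

theorem IsCoxeterTable.exists_represents (hT : T.IsCoxeterTable M o word) {W : Type*} [Group W]
    (cs : CoxeterSystem M W)
    (hword : ∀ σ i, cs.wordProd (word (T.act σ i)) = cs.wordProd (addLetter σ (word i))) :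
    ∃ e : Fin n ≃ W, (∀ i, e i = cs.wordProd (word i)) ∧ T.Represents cs e := by
  obtain ⟨f, hf⟩ := hT.exists_orbitMap cs
  have hleft (i : Fin n) : f (cs.wordProd (word i)) = i := (hf _).trans (hT.foldr_word i)
  have hone : cs.wordProd (word o) = 1 := by
    rw [List.eq_nil_of_length_eq_zero ((hT.len_eq_length o).symm.trans hT.len_origin),
      cs.wordProd_nil]
  have hsurj (w : W) : ∃ i, cs.wordProd (word i) = w := by
    induction w using cs.simple_induction_left with
    | one => exact ⟨o, hone⟩
    | mul_simple_left w j ih =>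
      obtain ⟨i, rfl⟩ := ih
      exact ⟨T.act (.inl j) i, by rw [hword, addLetter, cs.wordProd_cons]⟩
  have hlen (i : Fin n) : T.len i = cs.length (cs.wordProd (word i)) := by
    refine le_antisymm ?_ ((cs.length_wordProd_le _).trans_eq (hT.len_eq_length i).symm)
    obtain ⟨ω, hω, hωi⟩ := cs.exists_isReduced (cs.wordProd (word i))
    have hfold : ω.foldr (fun j ↦ T.act (.inl j)) o = i := by rw [← hf, ← hωi, hleft]
    calc T.len i ≤ ω.length := hfold ▸ hT.len_foldr_le ω
      _ = cs.length (cs.wordProd (word i)) := by rw [hωi, hω.eq]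
  refine ⟨.ofBijective _ ⟨Function.LeftInverse.injective hleft, hsurj⟩, fun _ ↦ rfl, ?_, hlen,
    hT.lt_of_len_lt⟩
  exact fun σ i ↦ (hword σ i).trans (wordProd_addLetter cs σ (word i))

end MulTable

end Enumeration

section Rewriting

variable {B : Type*} [DecidableEq B] (rules : List (List B × List B))

/-- Rewriting a word at its beginning by the first applicable rule. -/
def rewriteHead (ω : List B) : List B :=
  match rules.find? fun ρ ↦ ρ.1.isPrefixOf ω with
  | some ρ => ρ.2 ++ ω.drop ρ.1.length
  | none => ω

/-- Rewriting a word once at each position, from right to left. -/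
def rewritePass (ω : List B) : List B := ω.foldr (fun b ω' ↦ rewriteHead rules (b :: ω')) []

variable {rules} {W : Type*} [Group W] {M : CoxeterMatrix B} {cs : CoxeterSystem M W}

theorem wordProd_rewriteHead (h : ∀ ρ ∈ rules, cs.wordProd ρ.1 = cs.wordProd ρ.2) (ω : List B) :
    cs.wordProd (rewriteHead rules ω) = cs.wordProd ω := by
  rw [rewriteHead]
  split
  · next ρ hρ =>
    have hprefix : ρ.1.isPrefixOf ω := by simpa only using List.find?_some hρ
    obtain ⟨ω', rfl⟩ := List.isPrefixOf_iff_prefix.mp hprefix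
    rw [List.drop_left, cs.wordProd_append, cs.wordProd_append, h ρ (List.mem_of_find?_eq_some hρ)]
  · rfl

theorem wordProd_rewritePass (h : ∀ ρ ∈ rules, cs.wordProd ρ.1 = cs.wordProd ρ.2) (ω : List B) :
    cs.wordProd (rewritePass rules ω) = cs.wordProd ω := by
  induction ω with
  | nil => rfl
  | cons b ω ih =>
    rw [rewritePass, List.foldr_cons, wordProd_rewriteHead h, cs.wordProd_cons, cs.wordProd_cons,
      ← ih, rewritePass]

theorem wordProd_iterate_rewritePass (h : ∀ ρ ∈ rules, cs.wordProd ρ.1 = cs.wordProd ρ.2) (k : ℕ)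
    (ω : List B) : cs.wordProd ((rewritePass rules)^[k] ω) = cs.wordProd ω := by
  induction k with
  | zero => rfl
  | succ k ih => rw [Function.iterate_succ_apply', wordProd_rewritePass h, ih]

end Rewriting

section TypeB3

/-- A complete rewriting system for the Coxeter group of type B₃. -/
def b3Rules : List (List (Fin 3) × List (Fin 3)) :=
  [([0, 0], []), ([1, 1], []), ([2, 2], []), ([2, 0], [0, 2]), ([1, 0, 1], [0, 1, 0]),
    ([2, 1, 2, 1], [1, 2, 1, 2]), ([2, 1, 0, 2, 1, 0], [1, 2, 1, 0, 2, 1])]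

/-- The `b3Rules`-irreducible words in shortlex order. They are reduced words for the 48 elements of
the Coxeter group of type B₃, and their order fixes the numbering of these elements. -/
def b3Words : List (List (Fin 3)) :=
  [[],
    [0], [1], [2],
    [0, 1], [0, 2], [1, 0], [1, 2], [2, 1],
    [0, 1, 0], [0, 1, 2], [0, 2, 1], [1, 0, 2], [1, 2, 1], [2, 1, 0], [2, 1, 2],
    [0, 1, 0, 2], [0, 1, 2, 1], [0, 2, 1, 0], [0, 2, 1, 2], [1, 0, 2, 1], [1, 2, 1, 0],
    [1, 2, 1, 2], [2, 1, 0, 2],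
    [0, 1, 0, 2, 1], [0, 1, 2, 1, 0], [0, 1, 2, 1, 2], [0, 2, 1, 0, 2], [1, 0, 2, 1, 0],
    [1, 0, 2, 1, 2], [1, 2, 1, 0, 2], [2, 1, 0, 2, 1],
    [0, 1, 0, 2, 1, 0], [0, 1, 0, 2, 1, 2], [0, 1, 2, 1, 0, 2], [0, 2, 1, 0, 2, 1],
    [1, 0, 2, 1, 0, 2], [1, 2, 1, 0, 2, 1], [2, 1, 0, 2, 1, 2],
    [0, 1, 0, 2, 1, 0, 2], [0, 1, 2, 1, 0, 2, 1], [0, 2, 1, 0, 2, 1, 2], [1, 0, 2, 1, 0, 2, 1],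
    [1, 2, 1, 0, 2, 1, 2],
    [0, 1, 0, 2, 1, 0, 2, 1], [0, 1, 2, 1, 0, 2, 1, 2], [1, 0, 2, 1, 0, 2, 1, 2],
    [0, 1, 0, 2, 1, 0, 2, 1, 2]]

/-- The irreducible word of the `i`-th element. -/
def b3Word (i : Fin 48) : List (Fin 3) := b3Words.getD i []

/-- The action of the simple reflections on the numbers of the 48 elements. -/
def b3Act : Fin 3 ⊕ Fin 3 → List (Fin 48)
  | .inl 0 =>
    [1, 0, 4, 5, 2, 3, 9, 10, 11, 6, 7, 8, 16, 17, 18, 19, 12, 13, 14, 15, 24, 25, 26, 27, 20,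
     21, 22, 23, 32, 33, 34, 35, 28, 29, 30, 31, 39, 40, 41, 36, 37, 38, 44, 45, 42, 43, 47, 46]
  | .inl 1 =>
    [2, 6, 0, 7, 9, 12, 1, 3, 13, 4, 16, 20, 5, 8, 21, 22, 10, 24, 28, 29, 11, 14, 15, 30, 17,
     32, 33, 36, 18, 19, 23, 37, 25, 26, 39, 42, 27, 31, 43, 34, 44, 46, 35, 38, 40, 47, 41, 45]
  | .inl 2 =>
    [3, 5, 8, 0, 11, 1, 14, 15, 2, 18, 19, 4, 23, 22, 6, 7, 27, 26, 9, 10, 31, 30, 13, 12, 35,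
     34, 17, 16, 37, 38, 21, 20, 40, 41, 25, 24, 43, 28, 29, 45, 32, 33, 46, 36, 47, 39, 42, 44]
  | .inr 0 =>
    [1, 0, 6, 5, 9, 3, 2, 12, 14, 4, 16, 18, 7, 21, 8, 23, 10, 25, 11, 27, 28, 13, 30, 15, 32,
     17, 34, 19, 20, 36, 22, 37, 24, 39, 26, 40, 29, 31, 43, 33, 35, 45, 44, 38, 42, 41, 47, 46]
  | .inr 1 =>
    [2, 4, 0, 8, 1, 11, 9, 13, 3, 6, 17, 5, 20, 7, 18, 22, 24, 10, 14, 26, 12, 28, 15, 31, 16,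
     32, 19, 35, 21, 33, 37, 23, 25, 29, 40, 27, 42, 30, 41, 44, 34, 38, 36, 46, 39, 47, 43, 45]
  | .inr 2 =>
    [3, 5, 7, 0, 10, 1, 12, 2, 15, 16, 4, 19, 6, 22, 23, 8, 9, 26, 27, 11, 29, 30, 13, 14, 33,
     34, 17, 18, 36, 20, 21, 38, 39, 24, 25, 41, 28, 43, 31, 32, 45, 35, 46, 37, 47, 40, 42, 44]

/-- The multiplication table of type B₃. -/
def b3Table : MulTable 3 48 where
  act σ i := (b3Act σ).getD i 0
  len i := (b3Word i).length

theorem isCoxeterTable_b3Table : b3Table.IsCoxeterTable (CoxeterMatrix.B 3) 0 b3Word where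
  iterate_act := by decide +kernel
  foldr_word := by decide +kernel
  len_origin := by decide +kernel
  len_eq_length _ := rfl
  len_act_le := by decide +kernel
  lt_of_len_lt := by decide +kernel

theorem rewritePass_addLetter_b3Word :
    ∀ σ i, (rewritePass b3Rules)^[4] (addLetter σ (b3Word i)) = b3Word (b3Table.act σ i) := by
  decide +kernel

/-- The words of the elements at which `f_W` is defined but which are not separated. -/
def b3NonseparatedWords : List (List (Fin 3)) :=
  [[2, 1, 2], [1, 2, 1], [2, 1, 0, 2], [1, 2, 1, 0], [2, 1, 0, 2, 1], [1, 0, 2, 1, 0],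
    [0, 2, 1, 2], [1, 0, 2, 1, 2], [2, 1, 0, 2, 1, 2], [1, 0, 2, 1, 0, 2], [1, 2, 1, 0, 2, 1, 2],
    [0, 1, 2, 1], [0, 1, 0, 2, 1], [0, 2, 1, 0, 2, 1], [0, 2, 1, 0, 2, 1, 2],
    [1, 0, 2, 1, 0, 2, 1], [1, 0, 2, 1, 0, 2, 1, 2], [0, 1, 2, 1, 0], [0, 1, 2, 1, 0, 2, 1, 2],
    [0, 1, 0, 2, 1, 0, 2, 1]]

theorem b3NonseparatedWords_subset : {ω | ω ∈ b3NonseparatedWords} ⊆ Set.range b3Word := by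
  have : ∀ ω ∈ b3NonseparatedWords, ∃ i, b3Word i = ω := by decide +kernel
  exact this

theorem b3Table_fTable (i : Fin 48) :
    (b3Table.fTable.getD i none = none ↔ b3Word i = [0, 1, 0, 2, 1, 0]) ∧
    (b3Table.fTable.getD i none ≠ none ∧
      (b3Table.fTable.getD i none).map List.toFinset ≠ some {i} ↔
        b3Word i ∈ b3NonseparatedWords) := by
  revert i
  decide +kernel

variable {W : Type*} [Group W] (cs : CoxeterSystem (CoxeterMatrix.B 3) W)

theorem wordProd_eq_of_mem_b3Rules :
    ∀ ρ ∈ b3Rules, cs.wordProd ρ.1 = cs.wordProd ρ.2 := by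
  have h20 : cs.wordProd [2, 0] = cs.wordProd [0, 2] := cs.wordProd_braidWord_eq 2 0
  have h101 : cs.wordProd [1, 0, 1] = cs.wordProd [0, 1, 0] := cs.wordProd_braidWord_eq 0 1
  have h2121 : cs.wordProd [2, 1, 2, 1] = cs.wordProd [1, 2, 1, 2] := cs.wordProd_braidWord_eq 2 1
  have h210210 : cs.wordProd [2, 1, 0, 2, 1, 0] = cs.wordProd [1, 2, 1, 0, 2, 1] :=
    calc cs.wordProd ([2, 1] ++ [0, 2] ++ [1, 0])
      _ = cs.wordProd ([2, 1] ++ [2, 0] ++ [1, 0]) := by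
        simp only [cs.wordProd_append, h20]
      _ = cs.wordProd ([2, 1, 2] ++ [0, 1, 0]) := rfl
      _ = cs.wordProd ([2, 1, 2] ++ [1, 0, 1]) := by
        simp only [cs.wordProd_append, h101]
      _ = cs.wordProd ([2, 1, 2, 1] ++ [0, 1]) := rfl
      _ = cs.wordProd ([1, 2, 1, 2] ++ [0, 1]) := by
        simp only [cs.wordProd_append, h2121]
      _ = cs.wordProd ([1, 2, 1] ++ [2, 0] ++ [1]) := rfl
      _ = cs.wordProd ([1, 2, 1] ++ [0, 2] ++ [1]) := by
        simp only [cs.wordProd_append, h20]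
  have hsquare (j : Fin 3) : cs.wordProd [j, j] = cs.wordProd [] := by
    simp [CoxeterSystem.wordProd]
  simp only [b3Rules, List.forall_mem_cons, List.not_mem_nil, false_imp_iff, implies_true, and_true]
  exact ⟨hsquare 0, hsquare 1, hsquare 2, h20, h101, h2121, h210210⟩

theorem exists_represents_b3Table :
    ∃ e : Fin 48 ≃ W, (∀ i, e i = cs.wordProd (b3Word i)) ∧ b3Table.Represents cs e :=
  isCoxeterTable_b3Table.exists_represents cs fun σ i ↦ by
    rw [← rewritePass_addLetter_b3Word,
      wordProd_iterate_rewritePass (wordProd_eq_of_mem_b3Rules cs)]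

theorem injOn_wordProd_range_b3Word : Set.InjOn cs.wordProd (Set.range b3Word) := by
  obtain ⟨e, he, -⟩ := exists_represents_b3Table cs
  rintro _ ⟨i, rfl⟩ _ ⟨j, rfl⟩ hij
  rw [← he, ← he] at hij
  rw [e.injective hij]

variable (K : KLData (Set.range cs.simple))

theorem setOf_fW_eq_none : {x | fW K x = none} = {cs.wordProd [0, 1, 0, 2, 1, 0]} := by
  obtain ⟨e, he, hT⟩ := exists_represents_b3Table cs
  ext x
  obtain ⟨i, rfl⟩ := e.surjective x
  have hword : [0, 1, 0, 2, 1, 0] ∈ Set.range b3Word := ⟨32, rfl⟩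
  rw [Set.mem_ofPred_eq, hT.fW_eq_none_iff, (b3Table_fTable i).1, Set.mem_singleton_iff, he,
    (injOn_wordProd_range_b3Word cs).eq_iff ⟨i, rfl⟩ hword]

theorem setOf_not_separated :
    {x | (∃ F : Set W, fW K x = some F) ∧ ¬Separated K x} =
      cs.wordProd '' {ω | ω ∈ b3NonseparatedWords} := by
  obtain ⟨e, he, hT⟩ := exists_represents_b3Table cs
  ext x
  obtain ⟨i, rfl⟩ := e.surjective x
  rw [Set.mem_ofPred_eq, ← Option.ne_none_iff_exists', ne_eq, hT.fW_eq_none_iff, hT.separated_iff,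
    (b3Table_fTable i).2, he, (injOn_wordProd_range_b3Word cs).mem_image_iff
      b3NonseparatedWords_subset ⟨i, rfl⟩, Set.mem_ofPred_eq]

theorem ncard_setOf_not_separated :
    {x | (∃ F : Set W, fW K x = some F) ∧ ¬Separated K x}.ncard = 20 := by
  have hcard : b3NonseparatedWords.toFinset.card = 20 := by decide +kernel
  rw [setOf_not_separated,
    ((injOn_wordProd_range_b3Word cs).mono b3NonseparatedWords_subset).ncard_image,
    ← List.coe_toFinset, Set.ncard_coe_finset, hcard]

end TypeB3

end KLPaper

open KLPaper in
theorem statement_5 (W : Type*) [Group W]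
    (cs : CoxeterSystem (CoxeterMatrix.Bₙ 3) W)
    (s t u : W) (hs : s = cs.simple 0) (ht : t = cs.simple 1) (hu : u = cs.simple 2)
    (S : Set W) (hS : S = {s, t, u}) (K : KLData S) :
    {x : W | fW K x = none} = {s * t * s * u * t * s} ∧
    {x : W | (∃ F : Set W, fW K x = some F) ∧ ¬ Separated K x} =
      ({u * t * u, t * u * t, u * t * s * u, t * u * t * s, u * t * s * u * t,
        t * s * u * t * s, s * u * t * u, t * s * u * t * u, u * t * s * u * t * u,
        (t * s * u) ^ 2, t * u * t * s * u * t * u, s * t * u * t, s * t * s * u * t,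
        (s * u * t) ^ 2, s * u * t * s * u * t * u, t * s * u * t * s * u * t,
        t * s * u * t * s * u * t * u, s * t * u * t * s, s * t * u * t * s * u * t * u,
        s * t * s * u * t * s * u * t} : Set W) ∧
    Set.ncard {x : W | (∃ F : Set W, fW K x = some F) ∧ ¬ Separated K x} = 20 := by
  change CoxeterSystem (CoxeterMatrix.B 3) W at cs
  replace hs : cs.simple 0 = s := hs.symm
  replace ht : cs.simple 1 = t := ht.symm
  replace hu : cs.simple 2 = u := hu.symm
  obtain rfl : S = Set.range cs.simple := by
    ext x
    simp [hS, Fin.exists_fin_succ, hs, ht, hu, eq_comm]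
  refine ⟨(setOf_fW_eq_none cs K).trans ?_, (setOf_not_separated cs K).trans ?_,
    ncard_setOf_not_separated cs K⟩
  · simp [CoxeterSystem.wordProd, hs, ht, hu, mul_assoc]
  · simp [-List.mem_cons, b3NonseparatedWords, List.setOfPred_mem_cons, Set.image_insert_eq,
      CoxeterSystem.wordProd, hs, ht, hu, mul_assoc, pow_two]
end
end

section
/- In the symmetric group S₈, let 𝐚 = (3,2,1,5,4,3,2,6,5,4,3,7,6,5) and let y be the permutation with one-line notation 14327658, so that y = s₂s₃s₂s₅s₆s₅. For ε ∈ {0,1}¹⁴, the product s_{a₁}^{ε(1)} s_{a₂}^{ε(2)} ⋯ s_{a₁₄}^{ε(14)} equals y if and only if ε ∈ { λ_i + μ_j : 1 ≤ i, j ≤ 5 } ∪ { λ_i + μ_j + ν : i, j ∈ {4,5} }, where (with δ_k the k-th standard basis vector of {0,1}¹⁴ and + the coordinatewise sum, which in all listed cases involves vectors of pairwise disjoint support): λ₁ = δ₁+δ₂+δ₆, λ₂ = δ₂+δ₆+δ₇, λ₃ = δ₆+δ₇+δ₁₁, λ₄ = δ₇+δ₁₁+δ₁, λ₅ = δ₁₁+δ₁+δ₂,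 μ₁ = δ₄+δ₈+δ₉, μ₂ = δ₈+δ₉+δ₁₃, μ₃ = δ₉+δ₁₃+δ₁₄, μ₄ = δ₁₃+δ₁₄+δ₄, μ₅ = δ₁₄+δ₄+δ₈, ν = δ₅+δ₁₀. In particular there are exactly 29 such ε. -/
/-- The symmetric group `S₈`, the Weyl group of type `A₇`. -/
abbrev W8 := Equiv.Perm (Fin 8)

/-- The adjacent transposition `sᵢ₊₁ = (i+1, i+2)` (so `sgen i` is `s_{i+1}` in 1-based
notation). -/
def sgen (i : Fin 7) : W8 := Equiv.swap i.castSucc i.succ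

/-- The set of simple reflections (adjacent transpositions) of `S₈`. -/
def SA7 : Set W8 := {σ | ∃ i : Fin 7, σ = sgen i}

/-- The permutation `y = 14327658` (one-line notation). -/
def y8 : W8 :=
  ⟨![0, 3, 2, 1, 6, 5, 4, 7], ![0, 3, 2, 1, 6, 5, 4, 7],
    by intro x; fin_cases x <;> rfl, by intro x; fin_cases x <;> rfl⟩

/-- The word `𝐚 = (3,2,1,5,4,3,2,6,5,4,3,7,6,5)` (in `1`-based indexing), recorded here
as the `0`-based indices of the corresponding adjacent transpositions. -/
def aword : Fin 14 → Fin 7 := ![2, 1, 0, 4, 3, 2, 1, 5, 4, 3, 2, 6, 5, 4]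

/-- The subword product `s_{a₁}^{ε(1)} ⋯ s_{a₁₄}^{ε(14)}` associated to `ε ∈ {0,1}¹⁴`. -/
def subwordProd (ε : Fin 14 → ZMod 2) : W8 :=
  ((List.finRange 14).map fun k => sgen (aword k) ^ (ε k).val).prod

/-- The `k`-th standard basis vector `δ_{k+1}` of `{0,1}¹⁴` (`0`-based index `k`). -/
def dd (k : Fin 14) : Fin 14 → ZMod 2 := fun i => if i = k then 1 else 0

/-- The vectors `λ₁, …, λ₅`. -/
def lam : Fin 5 → (Fin 14 → ZMod 2) :=
  ![dd 0 + dd 1 + dd 5, dd 1 + dd 5 + dd 6, dd 5 + dd 6 + dd 10,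
    dd 6 + dd 10 + dd 0, dd 10 + dd 0 + dd 1]

/-- The vectors `μ₁, …, μ₅`. -/
def mu : Fin 5 → (Fin 14 → ZMod 2) :=
  ![dd 3 + dd 7 + dd 8, dd 7 + dd 8 + dd 12, dd 8 + dd 12 + dd 13,
    dd 12 + dd 13 + dd 3, dd 13 + dd 3 + dd 7]

/-- The vector `ν = δ₅ + δ₁₀`. -/
def nu : Fin 14 → ZMod 2 := dd 4 + dd 9

/-!
Since `y` lies in the parabolic subgroup `⟨s₂, s₃⟩ × ⟨s₅, s₆⟩`, the letters `s₁` and `s₇`, which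
occur once in `𝐚`, cannot be used, and the two letters `s₄` are used together or not at all. If
both are used, conjugation by `s₄` keeps the product `q` of the factors between them in the
stabilizer of `{1, 2, 3, 4}`, so `q` also stabilizes the intersection `{1, 2, 3}` and the union
`{1, …, 5}` of that set with its image under `s₄`. This rules out `s₃` and `s₅` in `q`, whence `q`
commutes with `s₄` and the two factors `s₄` cancel. What remains is a subword of `(3, 2, 3, 2, 3)`
with product `s₃s₂s₃`, and independently a subword of `(5, 6, 5, 6, 5)` with product `s₅s₆s₅`. Each
of these has five solutions, the arcs of three consecutive vertices of a pentagon. Exactly two of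
the arcs avoid the middle letter, so the solutions number `5² + 2² = 29`.
-/

lemma eq_zero_or_one_of_zmod_two (a : ZMod 2) : a = 0 ∨ a = 1 := by
  decide +revert

section AlternatingProd

variable {M : Type*} [Monoid M] {S : Type*} [SetLike S M] [SubmonoidClass S M] {H : S} {s t : M}

lemma pow_val_mul_pow_val {n : ℕ} [NeZero n] (hs : s ^ n = 1) (a b : ZMod n) :
    s ^ a.val * s ^ b.val = s ^ (a + b).val := by
  rw [← pow_add, ZMod.val_add, ← pow_eq_pow_mod _ hs]

lemma pow_val_mem_iff (ht : t ∉ H) (a : ZMod 2) : t ^ a.val ∈ H ↔ a = 0 := by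
  rcases eq_zero_or_one_of_zmod_two a with rfl | rfl <;> simp [ht, ZMod.val_one]

/-- The subword product of the alternating word `(s, t, s, t, s)`, the exponents being read
modulo `2`. -/
def alternatingProd (s t : M) (x : Fin 5 → ZMod 2) : M :=
  s ^ (x 0).val * t ^ (x 1).val * s ^ (x 2).val * t ^ (x 3).val * s ^ (x 4).val

lemma alternatingProd_mem (hs : s ∈ H) (ht : t ∈ H) (x : Fin 5 → ZMod 2) :
    alternatingProd s t x ∈ H :=
  mul_mem (mul_mem (mul_mem (mul_mem (pow_mem hs _) (pow_mem ht _)) (pow_mem hs _))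
    (pow_mem ht _)) (pow_mem hs _)

end AlternatingProd

/-- The indicator vector of the three cyclically consecutive vertices `i, i + 1, i + 2` of a
pentagon. -/
def pentagonArc (i : Fin 5) : Fin 5 → ZMod 2 :=
  fun k => if k = i ∨ k = i + 1 ∨ k = i + 2 then 1 else 0

lemma exists_eq_pentagonArc_iff (x : Fin 5 → ZMod 2) :
    (∃ i, x = pentagonArc i) ↔
      x 1 = 0 ∧ (x 0 + x 2 = 1 ∧ x 3 = 1 ∧ x 4 = 1) ∨
      x 1 = 1 ∧ x 3 = 0 ∧ (x 0 = 1 ∧ x 2 + x 4 = 1) ∨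
      x 1 = 1 ∧ x 3 = 1 ∧ x 2 = 1 ∧ (1 + x 0 = 1 ∧ 1 + x 4 = 1) := by
  decide +revert

section Braid

variable {G : Type*} [Group G] {s t : G}

lemma ne_one_of_braid (ht : t * t = 1) (braid : s * t * s = t * s * t) (hne : s ≠ t) :
    s ≠ 1 := by
  rintro rfl
  simp_all

lemma conj_ne_of_braid (hs : s * s = 1) (braid : s * t * s = t * s * t) (hne : s ≠ t) :
    s * t * s ≠ t := by
  intro h
  have hst : s * t = 1 := by simpa [mul_assoc] using braid.symm.trans h
  exact hne (mul_left_cancel (hs.trans hst.symm))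

lemma pow_mul_pow_mul_pow_eq_iff (hs : s * s = 1) (ht : t * t = 1)
    (braid : s * t * s = t * s * t) (hne : s ≠ t) (p q r : ZMod 2) :
    s ^ p.val * t ^ q.val * s ^ r.val = s * t * s ↔ p = 1 ∧ q = 1 ∧ r = 1 := by
  have hs1 : s ≠ 1 := ne_one_of_braid ht braid hne
  have hts : t * s ≠ 1 := fun h => hne (mul_right_cancel (hs.trans h.symm))
  have hsts : s * (t * s) ≠ t := by simpa [mul_assoc] using conj_ne_of_braid hs braid hne
  have hsts1 : s * (t * s) ≠ 1 := fun h =>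
    ne_one_of_braid hs braid.symm hne.symm (by simpa [hs] using mul_left_cancel (h.trans hs.symm))
  rcases eq_zero_or_one_of_zmod_two p with rfl | rfl <;>
  rcases eq_zero_or_one_of_zmod_two q with rfl | rfl <;>
  rcases eq_zero_or_one_of_zmod_two r with rfl | rfl <;>
  simp [ZMod.val_one, hs, mul_assoc, hs1, hts, hsts.symm, hsts1.symm]

theorem alternatingProd_eq_iff (hs : s * s = 1) (ht : t * t = 1)
    (braid : s * t * s = t * s * t) (hne : s ≠ t) (x : Fin 5 → ZMod 2) :
    alternatingProd s t x = s * t * s ↔ ∃ i, x = pentagonArc i := by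
  have reduced := pow_mul_pow_mul_pow_eq_iff hs ht braid hne
  have hs2 : s ^ 2 = 1 := (sq s).trans hs
  rw [exists_eq_pentagonArc_iff]
  rcases eq_zero_or_one_of_zmod_two (x 1) with h1 | h1
  · have : alternatingProd s t x = s ^ (x 0 + x 2).val * t ^ (x 3).val * s ^ (x 4).val := by
      simp [alternatingProd, h1, pow_val_mul_pow_val hs2]
    simp [this, reduced, h1]
  rcases eq_zero_or_one_of_zmod_two (x 3) with h3 | h3
  · have : alternatingProd s t x =
        s ^ (x 0).val * t ^ (1 : ZMod 2).val * s ^ (x 2 + x 4).val := by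
      simp [alternatingProd, h1, h3, mul_assoc, pow_val_mul_pow_val hs2]
    simp [this, reduced, h1, h3]
  rcases eq_zero_or_one_of_zmod_two (x 2) with h2 | h2
  · have : alternatingProd s t x = s ^ (x 0).val * t ^ (0 : ZMod 2).val * s ^ (x 4).val := by
      simp [alternatingProd, h1, h2, h3, mul_assoc, ZMod.val_one, ht]
    simp only [this, reduced, h1, h2, h3]
    simp
  · have : alternatingProd s t x =
        s ^ (x 0 + 1).val * t ^ (1 : ZMod 2).val * s ^ (1 + x 4).val := by
      calc alternatingProd s t x = s ^ (x 0).val * (t * s * t) * s ^ (x 4).val := by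
            simp [alternatingProd, h1, h2, h3, ZMod.val_one, mul_assoc]
        _ = _ := by
            simp [← braid, ← pow_val_mul_pow_val hs2, ZMod.val_one, mul_assoc]
    simp [this, reduced, h1, h2, h3]

end Braid

section FixingSubgroup

variable {α : Type*} {A : Set α} {a a' b b' : Equiv.Perm α}

lemma disjoint_of_mem_fixingSubgroup (ha : a ∈ fixingSubgroup (Equiv.Perm α) Aᶜ)
    (hb : b ∈ fixingSubgroup (Equiv.Perm α) A) : a.Disjoint b := fun x =>
  (em (x ∈ A)).symm.imp ((mem_fixingSubgroup_iff _).1 ha x) ((mem_fixingSubgroup_iff _).1 hb x)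

lemma mul_eq_mul_iff_of_mem_fixingSubgroup (ha : a ∈ fixingSubgroup (Equiv.Perm α) Aᶜ)
    (ha' : a' ∈ fixingSubgroup (Equiv.Perm α) Aᶜ) (hb : b ∈ fixingSubgroup (Equiv.Perm α) A)
    (hb' : b' ∈ fixingSubgroup (Equiv.Perm α) A) : a * b = a' * b' ↔ a = a' ∧ b = b' := by
  refine ⟨fun h => ?_, by rintro ⟨rfl, rfl⟩; rfl⟩
  have hdisj : Disjoint (fixingSubgroup (Equiv.Perm α) Aᶜ) (fixingSubgroup (Equiv.Perm α) A) :=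
    Subgroup.disjoint_def.2 fun hx hx' =>
      Equiv.Perm.disjoint_refl_iff.1 (disjoint_of_mem_fixingSubgroup hx hx')
  simpa using Subgroup.mul_injective_of_disjoint hdisj (a₁ := (⟨a, ha⟩, ⟨b, hb⟩))
    (a₂ := (⟨a', ha'⟩, ⟨b', hb'⟩)) h

end FixingSubgroup

section Subgroup

variable {G : Type*} [Group G] {H : Subgroup G} {q t : G}

lemma eq_and_conj_mem_of_pow_mul_pow_mem (ht : t ∉ H) (hq : q ∈ H) {a b : ZMod 2}
    (h : t ^ a.val * q * t ^ b.val ∈ H) : a = b ∧ (a = 1 → t * q * t ∈ H) := by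
  rcases eq_zero_or_one_of_zmod_two a with rfl | rfl <;>
  rcases eq_zero_or_one_of_zmod_two b with rfl | rfl <;>
  simp_all [ZMod.val_one, mul_mem_cancel_left, mul_mem_cancel_right]

lemma apply_mem_of_list_prod_mem {ι : Type*} {f : ι → G} {k : ι} {l : List ι}
    (hl : l.Nodup) (hk : k ∈ l) (hf : ∀ j ∈ l, j ≠ k → f j ∈ H) (h : (l.map f).prod ∈ H) :
    f k ∈ H := by
  obtain ⟨l₁, l₂, rfl⟩ := List.append_of_mem hk
  have mem_of_subset {l' : List ι} (hsub : l' ⊆ l₁ ++ k :: l₂) (hk' : k ∉ l') :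
      (l'.map f).prod ∈ H :=
    list_prod_mem (by simpa using fun j hj => hf j (hsub hj) (ne_of_mem_of_not_mem hj hk'))
  have hk₁ : k ∉ l₁ := fun h' => (List.nodup_append.1 hl).2.2 k h' k (by simp) rfl
  have hk₂ : k ∉ l₂ := (List.nodup_cons.1 (List.nodup_append.1 hl).2.1).1
  rw [List.map_append, List.prod_append, List.map_cons, List.prod_cons,
    mul_mem_cancel_left (mem_of_subset (by simp) hk₁),
    mul_mem_cancel_right (mem_of_subset (by simp) hk₂)] at h
  exact h

end Subgroup

section Parabolic

open scoped Pointwise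

lemma mem_stabilizer_smul_of_conj_mem {G α : Type*} [Group G] [MulAction G α] {A : Set α}
    {q t : G} (ht : t * t = 1) (h : t * q * t ∈ MulAction.stabilizer G A) :
    q ∈ MulAction.stabilizer G (t • A) := by
  have hA : (t * q * t) • A = A := h
  calc q • t • A = t • (t * q * t) • A := by simp [smul_smul, ← mul_assoc, ht]
    _ = t • A := by rw [hA]

/-- The maximal standard parabolic subgroup of `S₈` omitting the generator `sgen i`: the
permutations preserving the initial segment `{0, …, i}`. -/
def parabolic (i : Fin 7) : Subgroup W8 := MulAction.stabilizer W8 (Set.Iic i.castSucc)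

lemma sgen_mul_self (i : Fin 7) : sgen i * sgen i = 1 := Equiv.swap_mul_self _ _

lemma sgen_mem_parabolic_iff {i j : Fin 7} : sgen j ∈ parabolic i ↔ j ≠ i := by
  simp only [parabolic, MulAction.mem_stabilizer_set, Equiv.Perm.smul_def, Set.mem_Iic]
  decide +revert

lemma sgen_mem_fixingSubgroup_compl {i j : Fin 7} (h : j < i) :
    sgen j ∈ fixingSubgroup W8 (Set.Iic i.castSucc)ᶜ := by
  simp only [mem_fixingSubgroup_iff, Equiv.Perm.smul_def, Set.mem_compl_iff, Set.mem_Iic]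
  decide +revert

lemma sgen_mem_fixingSubgroup {i j : Fin 7} (h : i < j) :
    sgen j ∈ fixingSubgroup W8 (Set.Iic i.castSucc) := by
  simp only [mem_fixingSubgroup_iff, Equiv.Perm.smul_def, Set.mem_Iic]
  decide +revert

lemma commute_sgen_sgen {i j k : Fin 7} (hij : i < j) (hjk : j < k) :
    Commute (sgen i) (sgen k) :=
  (disjoint_of_mem_fixingSubgroup (sgen_mem_fixingSubgroup_compl hij)
    (sgen_mem_fixingSubgroup hjk)).commute

lemma mem_sgen_smul_iff {i : Fin 7} {A : Set (Fin 8)} {x : Fin 8} :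
    x ∈ sgen i • A ↔ sgen i x ∈ A := by
  rw [Set.mem_smul_set_iff_inv_smul_mem, inv_eq_of_mul_eq_one_right (sgen_mul_self i),
    Equiv.Perm.smul_def]

lemma Iic_castSucc_eq_inter_sgen_smul {i j : Fin 7} (hij : (j : ℕ) + 1 = i) :
    Set.Iic j.castSucc = Set.Iic i.castSucc ∩ sgen i • Set.Iic i.castSucc := by
  ext x
  rw [Set.mem_inter_iff, mem_sgen_smul_iff]
  simp only [Set.mem_Iic]
  decide +revert

lemma Iic_castSucc_eq_union_sgen_smul {i j : Fin 7} (hij : (i : ℕ) + 1 = j) :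
    Set.Iic j.castSucc = Set.Iic i.castSucc ∪ sgen i • Set.Iic i.castSucc := by
  ext x
  rw [Set.mem_union, mem_sgen_smul_iff]
  simp only [Set.mem_Iic]
  decide +revert

lemma mem_parabolic_of_conj_mem {i j : Fin 7} {q : W8} (hq : q ∈ parabolic i)
    (hconj : sgen i * q * sgen i ∈ parabolic i)
    (hij : (j : ℕ) + 1 = i ∨ (i : ℕ) + 1 = j) : q ∈ parabolic j := by
  have hq' := mem_stabilizer_smul_of_conj_mem (sgen_mul_self i) hconj
  rcases hij with hij | hij
  · rw [parabolic, Iic_castSucc_eq_inter_sgen_smul hij]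
    exact MulAction.stabilizer_inf_stabilizer_le_stabilizer_inter ⟨hq, hq'⟩
  · rw [parabolic, Iic_castSucc_eq_union_sgen_smul hij]
    exact MulAction.stabilizer_inf_stabilizer_le_stabilizer_union ⟨hq, hq'⟩

lemma sgen_pow_mem_parabolic {i j : Fin 7} (h : j ≠ i) (n : ℕ) : sgen j ^ n ∈ parabolic i :=
  pow_mem (sgen_mem_parabolic_iff.2 h) n

lemma sgen_pow_val_mem_parabolic_self_iff {i : Fin 7} {a : ZMod 2} :
    sgen i ^ a.val ∈ parabolic i ↔ a = 0 :=
  pow_val_mem_iff (fun h => sgen_mem_parabolic_iff.1 h rfl) a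

end Parabolic

section Subword

/-- The `0`-based positions of the letters `s₃, s₂` in `𝐚`, which carry the supports of the `λᵢ`. -/
def lamPos : Fin 5 → Fin 14 := ![0, 1, 5, 6, 10]

/-- The `0`-based positions of the letters `s₅, s₆` in `𝐚`, which carry the supports of the `μⱼ`. -/
def muPos : Fin 5 → Fin 14 := ![3, 7, 8, 12, 13]

/-- The product of the factors of `subwordProd ε` between the two occurrences of `s₄`. -/
def innerProd (ε : Fin 14 → ZMod 2) : W8 :=
  sgen 2 ^ (ε 5).val * sgen 1 ^ (ε 6).val * (sgen 5 ^ (ε 7).val * sgen 4 ^ (ε 8).val)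

/-- The exponent vectors, with `0`-based positions, for which `s₁` and `s₇` do not occur and the
two factors `s₄` cancel: either both are absent, or both are present and the neighbours `s₃`, `s₅`
of `s₄` do not occur between them. -/
structure IsDecoupled (ε : Fin 14 → ZMod 2) : Prop where
  apply_two : ε 2 = 0
  apply_eleven : ε 11 = 0
  apply_four_eq_apply_nine : ε 4 = ε 9
  apply_five_and_apply_eight : ε 4 = 1 → ε 5 = 0 ∧ ε 8 = 0

variable (ε : Fin 14 → ZMod 2)

lemma subwordProd_eq_mul_innerProd_mul :
    subwordProd ε =
      sgen 2 ^ (ε 0).val * sgen 1 ^ (ε 1).val * sgen 0 ^ (ε 2).val * sgen 4 ^ (ε 3).val *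
      (sgen 3 ^ (ε 4).val * innerProd ε * sgen 3 ^ (ε 9).val) *
      sgen 2 ^ (ε 10).val * sgen 6 ^ (ε 11).val * sgen 5 ^ (ε 12).val * sgen 4 ^ (ε 13).val := by
  simp [subwordProd, innerProd, aword, List.finRange_succ, mul_assoc]

variable {ε}

lemma apply_eq_zero_of_unique_letter {k : Fin 14} (hk : ∀ j, j ≠ k → aword j ≠ aword k)
    (h : subwordProd ε ∈ parabolic (aword k)) : ε k = 0 :=
  sgen_pow_val_mem_parabolic_self_iff.1 <|
    apply_mem_of_list_prod_mem (f := fun j => sgen (aword j) ^ (ε j).val) (List.nodup_finRange 14)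
      (List.mem_finRange k) (fun j _ hj => sgen_pow_mem_parabolic (hk j hj) _) h

lemma innerProd_mem_parabolic_three : innerProd ε ∈ parabolic 3 := by
  refine mul_mem (mul_mem ?_ ?_) (mul_mem ?_ ?_) <;> exact sgen_pow_mem_parabolic (by decide) _

lemma apply_five_eq_zero_of_innerProd_mem (h : innerProd ε ∈ parabolic 2) : ε 5 = 0 := by
  simpa [innerProd, ← mul_assoc, mul_mem_cancel_right, sgen_pow_mem_parabolic,
    sgen_pow_val_mem_parabolic_self_iff] using h

lemma apply_eight_eq_zero_of_innerProd_mem (h : innerProd ε ∈ parabolic 4) : ε 8 = 0 := by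
  simpa [innerProd, mul_assoc, mul_mem_cancel_left, sgen_pow_mem_parabolic,
    sgen_pow_val_mem_parabolic_self_iff] using h

lemma pow_mul_innerProd_mul_pow_mem (h : subwordProd ε ∈ parabolic 3) :
    sgen 3 ^ (ε 4).val * innerProd ε * sgen 3 ^ (ε 9).val ∈ parabolic 3 := by
  rw [subwordProd_eq_mul_innerProd_mul] at h
  generalize sgen 3 ^ (ε 4).val * _ * _ = m at h ⊢
  simp only [mul_mem_cancel_right, sgen_pow_mem_parabolic, ne_eq, Fin.reduceEq,
    not_false_eq_true] at h
  simpa only [mul_assoc, mul_mem_cancel_left, sgen_pow_mem_parabolic, ne_eq, Fin.reduceEq,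
    not_false_eq_true] using h

lemma isDecoupled_of_mem_parabolic (h0 : subwordProd ε ∈ parabolic 0)
    (h3 : subwordProd ε ∈ parabolic 3) (h6 : subwordProd ε ∈ parabolic 6) : IsDecoupled ε := by
  have hinner : innerProd ε ∈ parabolic 3 := innerProd_mem_parabolic_three
  obtain ⟨h49, hconj⟩ := eq_and_conj_mem_of_pow_mul_pow_mem
    (fun h => sgen_mem_parabolic_iff.1 h rfl) hinner (pow_mul_innerProd_mul_pow_mem h3)
  refine ⟨apply_eq_zero_of_unique_letter (by decide) h0,
    apply_eq_zero_of_unique_letter (by decide) h6, h49, fun h4 => ⟨?_, ?_⟩⟩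
  · exact apply_five_eq_zero_of_innerProd_mem
      (mem_parabolic_of_conj_mem hinner (hconj h4) (by decide))
  · exact apply_eight_eq_zero_of_innerProd_mem
      (mem_parabolic_of_conj_mem hinner (hconj h4) (by decide))

lemma IsDecoupled.pow_mul_innerProd_mul_pow (h : IsDecoupled ε) :
    sgen 3 ^ (ε 4).val * innerProd ε * sgen 3 ^ (ε 9).val = innerProd ε := by
  rw [← h.apply_four_eq_apply_nine]
  rcases eq_zero_or_one_of_zmod_two (ε 4) with h4 | h4
  · simp [h4]
  obtain ⟨h5, h8⟩ := h.apply_five_and_apply_eight h4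
  have hinner : innerProd ε = sgen 1 ^ (ε 6).val * sgen 5 ^ (ε 7).val := by
    simp [innerProd, h5, h8]
  have hcomm : Commute (sgen 3) (innerProd ε) := hinner ▸
    ((commute_sgen_sgen (j := 2) (by decide) (by decide)).symm.pow_right _).mul_right
      ((commute_sgen_sgen (j := 4) (by decide) (by decide)).pow_right _)
  rw [h4, ZMod.val_one, pow_one, hcomm.eq, mul_assoc, sgen_mul_self, mul_one]

theorem IsDecoupled.subwordProd_eq (h : IsDecoupled ε) :
    subwordProd ε = alternatingProd (sgen 2) (sgen 1) (ε ∘ lamPos) *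
      alternatingProd (sgen 4) (sgen 5) (ε ∘ muPos) := by
  have left {j : Fin 7} (hj : j < 3) (n : ℕ) := pow_mem (sgen_mem_fixingSubgroup_compl hj) n
  have right {j : Fin 7} (hj : 3 < j) (n : ℕ) := pow_mem (sgen_mem_fixingSubgroup hj) n
  have comm₁₂ : Commute (sgen 4 ^ (ε 3).val) (sgen 2 ^ (ε 5).val * sgen 1 ^ (ε 6).val) :=
    (disjoint_of_mem_fixingSubgroup (mul_mem (left (by decide) _) (left (by decide) _))
      (right (by decide) _)).commute.symm
  have comm₂₃ : Commute (sgen 4 ^ (ε 3).val * (sgen 5 ^ (ε 7).val * sgen 4 ^ (ε 8).val))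
      (sgen 2 ^ (ε 10).val) :=
    (disjoint_of_mem_fixingSubgroup (left (by decide) _) (mul_mem (right (by decide) _)
      (mul_mem (right (by decide) _) (right (by decide) _)))).commute.symm
  calc subwordProd ε
      = sgen 2 ^ (ε 0).val * sgen 1 ^ (ε 1).val * sgen 4 ^ (ε 3).val *
          (sgen 2 ^ (ε 5).val * sgen 1 ^ (ε 6).val * (sgen 5 ^ (ε 7).val * sgen 4 ^ (ε 8).val)) *
          (sgen 2 ^ (ε 10).val * (sgen 5 ^ (ε 12).val * sgen 4 ^ (ε 13).val)) := by
        rw [subwordProd_eq_mul_innerProd_mul, h.pow_mul_innerProd_mul_pow, h.apply_two,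
          h.apply_eleven]
        simp only [innerProd, ZMod.val_zero, pow_zero, mul_one, mul_assoc]
    _ = sgen 2 ^ (ε 0).val * sgen 1 ^ (ε 1).val * (sgen 2 ^ (ε 5).val * sgen 1 ^ (ε 6).val) *
          sgen 2 ^ (ε 10).val * (sgen 4 ^ (ε 3).val * (sgen 5 ^ (ε 7).val * sgen 4 ^ (ε 8).val) *
          (sgen 5 ^ (ε 12).val * sgen 4 ^ (ε 13).val)) := by
        rw [comm₁₂.mul_mul_mul_comm, comm₂₃.mul_mul_mul_comm]
    _ = _ := by simp [alternatingProd, lamPos, muPos, mul_assoc]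

lemma y8_eq : y8 = sgen 2 * sgen 1 * sgen 2 * (sgen 4 * sgen 5 * sgen 4) := by
  decide

lemma y8_mem_parabolic {i : Fin 7} (hi : i = 0 ∨ i = 3 ∨ i = 6) : y8 ∈ parabolic i := by
  simp only [parabolic, MulAction.mem_stabilizer_set, Equiv.Perm.smul_def, Set.mem_Iic]
  decide +revert

theorem IsDecoupled.subwordProd_eq_y8_iff (h : IsDecoupled ε) :
    subwordProd ε = y8 ↔
      (∃ i, ε ∘ lamPos = pentagonArc i) ∧ ∃ j, ε ∘ muPos = pentagonArc j := by
  have left {j : Fin 7} (hj : j < 3) := sgen_mem_fixingSubgroup_compl hj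
  have right {j : Fin 7} (hj : 3 < j) := sgen_mem_fixingSubgroup hj
  have braid₂₁ : sgen 2 * sgen 1 * sgen 2 = sgen 1 * sgen 2 * sgen 1 := by decide
  have braid₄₅ : sgen 4 * sgen 5 * sgen 4 = sgen 5 * sgen 4 * sgen 5 := by decide
  rw [h.subwordProd_eq, y8_eq,
    ← alternatingProd_eq_iff (sgen_mul_self 2) (sgen_mul_self 1) braid₂₁ (by decide),
    ← alternatingProd_eq_iff (sgen_mul_self 4) (sgen_mul_self 5) braid₄₅ (by decide)]
  exact mul_eq_mul_iff_of_mem_fixingSubgroup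
    (alternatingProd_mem (left (by decide)) (left (by decide)) _)
    (mul_mem (mul_mem (left (by decide)) (left (by decide))) (left (by decide)))
    (alternatingProd_mem (right (by decide)) (right (by decide)) _)
    (mul_mem (mul_mem (right (by decide)) (right (by decide))) (right (by decide)))

theorem subwordProd_eq_y8_iff :
    subwordProd ε = y8 ↔ IsDecoupled ε ∧ (∃ i, ε ∘ lamPos = pentagonArc i) ∧
      ∃ j, ε ∘ muPos = pentagonArc j := by
  refine ⟨fun h => ?_, fun ⟨decoupled, arcs⟩ => decoupled.subwordProd_eq_y8_iff.2 arcs⟩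
  have decoupled : IsDecoupled ε := by
    apply isDecoupled_of_mem_parabolic <;> rw [h] <;> exact y8_mem_parabolic (by decide)
  exact ⟨decoupled, decoupled.subwordProd_eq_y8_iff.1 h⟩

end Subword

section Solutions

/-- The candidate solution `λᵢ + μⱼ + cν` indexed by `(i, j, c)`. -/
def solution (p : Fin 5 × Fin 5 × ZMod 2) : Fin 14 → ZMod 2 := lam p.1 + mu p.2.1 + p.2.2 • nu

/-- The indices `(i, j, c)` of actual solutions: `ν` may be added only if the arcs `i` and `j`
both avoid their middle vertex `2`, that is, if the letters between the two factors `s₄` commute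
with `s₄`. -/
def solutionIndices : Finset (Fin 5 × Fin 5 × ZMod 2) :=
  {p | p.2.2 = 1 → pentagonArc p.1 2 = 0 ∧ pentagonArc p.2.1 2 = 0}

lemma ext_positions {ε ε' : Fin 14 → ZMod 2} (hlam : ε ∘ lamPos = ε' ∘ lamPos)
    (hmu : ε ∘ muPos = ε' ∘ muPos) (h4 : ε 4 = ε' 4) (h9 : ε 9 = ε' 9) (h2 : ε 2 = ε' 2)
    (h11 : ε 11 = ε' 11) : ε = ε' := by
  have cover (k : Fin 14) :
      (∃ i, lamPos i = k) ∨ (∃ j, muPos j = k) ∨ k = 4 ∨ k = 9 ∨ k = 2 ∨ k = 11 := by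
    decide +revert
  funext k
  obtain ⟨i, rfl⟩ | ⟨j, rfl⟩ | rfl | rfl | rfl | rfl := cover k
  exacts [congrFun hlam i, congrFun hmu j, h4, h9, h2, h11]

lemma solution_values (i j : Fin 5) (c : ZMod 2) :
    solution (i, j, c) ∘ lamPos = pentagonArc i ∧ solution (i, j, c) ∘ muPos = pentagonArc j ∧
      solution (i, j, c) 4 = c ∧ solution (i, j, c) 9 = c ∧ solution (i, j, c) 2 = 0 ∧
      solution (i, j, c) 11 = 0 := by
  decide +revert

lemma eq_solution_iff (ε : Fin 14 → ZMod 2) (i j : Fin 5) (c : ZMod 2) :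
    ε = solution (i, j, c) ↔ ε ∘ lamPos = pentagonArc i ∧ ε ∘ muPos = pentagonArc j ∧
      ε 4 = c ∧ ε 9 = c ∧ ε 2 = 0 ∧ ε 11 = 0 := by
  obtain ⟨hlam, hmu, h4, h9, h2, h11⟩ := solution_values i j c
  refine ⟨by rintro rfl; exact solution_values i j c, fun ⟨elam, emu, e4, e9, e2, e11⟩ => ?_⟩
  exact ext_positions (elam.trans hlam.symm) (emu.trans hmu.symm) (e4.trans h4.symm)
    (e9.trans h9.symm) (e2.trans h2.symm) (e11.trans h11.symm)

lemma pentagonArc_injective : Function.Injective pentagonArc := by decide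

lemma pentagonArc_two_eq_zero_iff {i : Fin 5} : pentagonArc i 2 = 0 ↔ i = 3 ∨ i = 4 := by
  decide +revert

lemma solution_injective : Function.Injective solution := by
  rintro ⟨i, j, c⟩ ⟨i', j', c'⟩ h
  obtain ⟨hi, hj, hc, -⟩ := (eq_solution_iff _ i j c).1 rfl
  obtain ⟨hi', hj', hc', -⟩ := (eq_solution_iff _ i' j' c').1 h
  rw [pentagonArc_injective (hi.symm.trans hi'), pentagonArc_injective (hj.symm.trans hj'),
    hc.symm.trans hc']

theorem setOf_subwordProd_eq_y8 : {ε | subwordProd ε = y8} = solution '' solutionIndices := by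
  ext ε
  have decoupled_iff {i j : Fin 5} (hi : ε ∘ lamPos = pentagonArc i)
      (hj : ε ∘ muPos = pentagonArc j) : IsDecoupled ε ↔
        (ε 4 = 1 → pentagonArc i 2 = 0 ∧ pentagonArc j 2 = 0) ∧ ε 9 = ε 4 ∧ ε 2 = 0 ∧ ε 11 = 0 := by
    rw [← hi, ← hj]
    exact ⟨fun h => ⟨h.apply_five_and_apply_eight, h.apply_four_eq_apply_nine.symm,
      h.apply_two, h.apply_eleven⟩,
      fun ⟨h58, h49, h2, h11⟩ => ⟨h2, h11, h49.symm, h58⟩⟩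
  simp only [Set.mem_ofPred_eq, subwordProd_eq_y8_iff, Set.mem_image, Finset.mem_coe, Prod.exists,
    solutionIndices, Finset.mem_filter_univ, eq_comm (b := ε), eq_solution_iff]
  constructor
  · rintro ⟨h, ⟨i, hi⟩, j, hj⟩
    obtain ⟨harc, h9, h2, h11⟩ := (decoupled_iff hi hj).1 h
    exact ⟨i, j, ε 4, harc, hi, hj, rfl, h9, h2, h11⟩
  · rintro ⟨i, j, c, harc, hi, hj, rfl, h9, h2, h11⟩
    exact ⟨(decoupled_iff hi hj).2 ⟨harc, h9, h2, h11⟩, ⟨i, hi⟩, j, hj⟩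

theorem ncard_subwordProd_eq_y8 : Set.ncard {ε | subwordProd ε = y8} = 29 := by
  rw [setOf_subwordProd_eq_y8, Set.ncard_image_of_injective _ solution_injective,
    Set.ncard_coe_finset]
  decide

theorem subwordProd_eq_y8_iff_exists (ε : Fin 14 → ZMod 2) :
    subwordProd ε = y8 ↔ (∃ i j : Fin 5, ε = lam i + mu j) ∨
      (∃ i j : Fin 5, (i = 3 ∨ i = 4) ∧ (j = 3 ∨ j = 4) ∧ ε = lam i + mu j + nu) := by
  have param : subwordProd ε = y8 ↔ ∃ i j c, (i, j, c) ∈ solutionIndices ∧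
      ε = solution (i, j, c) := by
    simpa [eq_comm] using Set.ext_iff.1 setOf_subwordProd_eq_y8 ε
  have exists_zmod {P : ZMod 2 → Prop} : (∃ c, P c) ↔ P 0 ∨ P 1 := Fin.exists_fin_two
  simp only [param, solutionIndices, Finset.mem_filter_univ, pentagonArc_two_eq_zero_iff, solution,
    exists_zmod, exists_or]
  simp [and_assoc]

end Solutions

theorem statement_14 :
    y8 = sgen 1 * sgen 2 * sgen 1 * sgen 4 * sgen 5 * sgen 4 ∧
    (∀ ε : Fin 14 → ZMod 2, subwordProd ε = y8 ↔
      (∃ i j : Fin 5, ε = lam i + mu j) ∨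
      (∃ i j : Fin 5, (i = 3 ∨ i = 4) ∧ (j = 3 ∨ j = 4) ∧ ε = lam i + mu j + nu)) ∧
    Set.ncard {ε : Fin 14 → ZMod 2 | subwordProd ε = y8} = 29 := by
  exact ⟨by decide, subwordProd_eq_y8_iff_exists, ncard_subwordProd_eq_y8⟩
end
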